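/- arXiv:2007.00070 — 2 statements merged into one kernel-verified Lean document; each statement's English description precedes it below -/
import Mathlib

section
/- Fix an integer d ≥ 2. Suppose A ⊆ ℤ is d-automatic and stable in (ℤ,+). Then A belongs to the Boolean algebra of subsets of ℤ generated by (i) the cosets c + H of subgroups H ≤ (ℤ,+), and (ii) the sets β + (C(a₁;δ₁) + ⋯ + C(a_k;δ_k)), where k ∈ ℕ, β, a₁, …, a_k ∈ ℤ, δ₁, …, δ_k are positive integers, + of sets denotes Minkowski sum, and the empty sum is {0}. -/
/-- A language is regular if it is recognized by a DFA with finitely many states. -/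
def RegularLang {α : Type} (L : Set (List α)) : Prop :=
  ∃ (Q : Type) (_ : Fintype Q) (M : DFA α Q), M.accepts = L

/-- Evaluation of a word over ℤ base `d`, least significant digit first. -/
def evalZ (d : ℤ) : List ℤ → ℤ
  | [] => 0
  | k :: σ => k + d * evalZ d σ

/-- `A ⊆ ℤ` is `d`-automatic: the language of all base-`d` representations of elements of `A`
over the alphabet `Σ± = {−(d−1),…,d−1}` is regular. -/
def AutomaticZ (d : ℕ) (A : Set ℤ) : Prop :=
  RegularLang {σ : List ℤ | (∀ k ∈ σ, k.natAbs ≤ d - 1) ∧ evalZ d σ ∈ A}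

/-- An `N`-ladder for a binary relation. -/
def HasLadder {X Y : Type*} (R : X → Y → Prop) (N : ℕ) : Prop :=
  ∃ (a : Fin (N + 1) → X) (b : Fin (N + 1) → Y), ∀ i j, R (a i) (b j) ↔ i ≤ j

/-- A binary relation is stable if for some `N` it admits no `N`-ladder. -/
def StableRel {X Y : Type*} (R : X → Y → Prop) : Prop := ∃ N : ℕ, ¬ HasLadder R N

/-- A subset of an abelian group is stable in the group if `x + y ∈ A` is a stable relation. -/
def StableIn {G : Type*} [AddCommGroup G] (A : Set G) : Prop :=
  StableRel fun x y : G => x + y ∈ A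

/-- `C(a;δ) = {a + d^δ·a + d^{2δ}·a + ⋯ + d^{nδ}·a : n ∈ ℕ}`. -/
def Cset (d a : ℤ) (δ : ℕ) : Set ℤ :=
  {x | ∃ n : ℕ, x = ∑ i ∈ Finset.range (n + 1), d ^ (i * δ) * a}

/-- Membership in the Boolean algebra of sets generated by a family `S`. -/
inductive InBoolAlg {X : Type*} (S : Set (Set X)) : Set X → Prop
  | base : ∀ s ∈ S, InBoolAlg S s
  | empty : InBoolAlg S ∅
  | compl : ∀ s, InBoolAlg S s → InBoolAlg S sᶜ
  | union : ∀ s t, InBoolAlg S s → InBoolAlg S t → InBoolAlg S (s ∪ t)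

namespace StableAutomatic

open Filter

/-! ### Ultrafilters acting on sets of integers -/

/-- The limit of the translates `S - x` as `x` tends to the ultrafilter `p`. -/
def act (p : Ultrafilter ℤ) (S : Set ℤ) : Set ℤ := {n | ∀ᶠ x in (p : Filter ℤ), n + x ∈ S}

theorem mem_act {p : Ultrafilter ℤ} {S : Set ℤ} {n : ℤ} :
    n ∈ act p S ↔ ∀ᶠ x in (p : Filter ℤ), n + x ∈ S := Iff.rfl

/-- An ultrafilter limit is unchanged when the set is modified away from the ultrafilter. -/
theorem eventually_iff_of_eventually {α : Type*} {p : Ultrafilter α} {P Q : α → Prop}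
    (h : ∀ᶠ x in (p : Filter α), (P x ↔ Q x)) :
    (∀ᶠ x in (p : Filter α), P x) ↔ ∀ᶠ x in (p : Filter α), Q x :=
  eventually_congr h

theorem eventually_const_iff {α : Type*} {p : Ultrafilter α} {P : Prop} :
    (∀ᶠ _ in (p : Filter α), P) ↔ P := eventually_const

theorem act_add (p q : Ultrafilter ℤ) (S : Set ℤ) :
    act ((Ultrafilter.add).add p q) S = act p (act q S) := by
  ext n
  have := Ultrafilter.eventually_add p q (fun x => n + x ∈ S)
  simp only [mem_act]
  refine this.trans ?_
  simp only [add_assoc]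

theorem act_pure (z : ℤ) (S : Set ℤ) : act (pure z) S = {n | n + z ∈ S} := by
  ext n
  simp [act, Ultrafilter.coe_pure]

theorem act_symmDiff (p : Ultrafilter ℤ) (S T : Set ℤ) :
    act p (symmDiff S T) = symmDiff (act p S) (act p T) := by
  ext n
  simp only [mem_act, Set.mem_symmDiff, Ultrafilter.eventually_or, eventually_and,
    Ultrafilter.eventually_not]

theorem act_empty (p : Ultrafilter ℤ) : act p ∅ = ∅ := by
  ext n
  simp [act, p.neBot.ne]

/-- The limit operators of any two ultrafilters commute on `S`. -/
def Commuting (S : Set ℤ) : Prop := ∀ p q, act p (act q S) = act q (act p S)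

theorem Commuting.act {S : Set ℤ} (hS : Commuting S) (r : Ultrafilter ℤ) :
    Commuting (act r S) := by
  have rot : ∀ a b c : Ultrafilter ℤ, StableAutomatic.act a (StableAutomatic.act b
      (StableAutomatic.act c S)) = StableAutomatic.act c (StableAutomatic.act a
      (StableAutomatic.act b S)) := fun a b c => by
    have := hS ((Ultrafilter.add).add a b) c
    simpa only [act_add] using this
  intro p q
  rw [hS q r, rot p r q]

theorem Commuting.symmDiff {S T : Set ℤ} (hS : Commuting S) (hT : Commuting T) :
    Commuting (symmDiff S T) := by
  intro p q
  simp only [act_symmDiff, hS p q, hT p q]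

/-- Ultrafilter quantifiers commute over a stable set. -/
theorem eventually_comm_of_stable {A : Set ℤ} (hst : StableIn A) (p q : Ultrafilter ℤ) (n : ℤ)
    (h : ∀ᶠ x in (p : Filter ℤ), ∀ᶠ y in (q : Filter ℤ), n + x + y ∈ A) :
    ∀ᶠ y in (q : Filter ℤ), ∀ᶠ x in (p : Filter ℤ), n + y + x ∈ A := by
  by_contra hcon
  rw [← Ultrafilter.eventually_not] at hcon
  simp only [← Ultrafilter.eventually_not] at hcon
  obtain ⟨N, hN⟩ := hst
  apply hN
  obtain ⟨f, hf, hr⟩ := exists_seq_of_forall_finset_exists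
    (fun z : ℤ × ℤ => (∀ᶠ y in (q : Filter ℤ), n + z.1 + y ∈ A) ∧
      (∀ᶠ x in (p : Filter ℤ), ¬ n + z.2 + x ∈ A) ∧ n + z.1 + z.2 ∈ A)
    (fun z w => n + z.1 + w.2 ∈ A ∧ ¬ n + z.2 + w.1 ∈ A) (by
      intro s hs
      have h1 : ∀ᶠ x in (p : Filter ℤ), ∀ z ∈ s, ¬ n + z.2 + x ∈ A :=
        (eventually_all_finset s).2 fun z hz => (hs z hz).2.1
      obtain ⟨x, hx, hx'⟩ := (h.and h1).exists
      have h2 : ∀ᶠ y in (q : Filter ℤ), ∀ z ∈ s, n + z.1 + y ∈ A :=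
        (eventually_all_finset s).2 fun z hz => (hs z hz).1
      obtain ⟨y, ⟨hy1, hy2⟩, hy3⟩ := ((hcon.and hx).and h2).exists
      exact ⟨(x, y), ⟨hx, hy1, hy2⟩, fun z hz => ⟨hy3 z hz, hx' z hz⟩⟩)
  refine ⟨fun i => n + (f i).1, fun j => (f j).2, fun i j => ?_⟩
  rcases lt_trichotomy i j with hij | rfl | hij
  · exact iff_of_true (hr i j hij).1 hij.le
  · exact iff_of_true (hf i).2.2 le_rfl
  · refine iff_of_false ?_ (not_le.2 hij)
    have := (hr j i hij).2
    change ¬ n + (f i).1 + (f j).2 ∈ A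
    rwa [show n + (f i).1 + (f j).2 = n + (f j).2 + (f i).1 by ring]

theorem Commuting.of_stableIn {A : Set ℤ} (hst : StableIn A) : Commuting A := fun p q => by
  ext n
  exact ⟨eventually_comm_of_stable hst p q n, eventually_comm_of_stable hst q p n⟩

/-- The preimage of `S` under `n ↦ r + D * n`. -/
def pull (D r : ℤ) (S : Set ℤ) : Set ℤ := {n | r + D * n ∈ S}

theorem mem_pull {D r n : ℤ} {S : Set ℤ} : n ∈ pull D r S ↔ r + D * n ∈ S := Iff.rfl

theorem pull_pull (D r E s : ℤ) (S : Set ℤ) :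
    pull E s (pull D r S) = pull (D * E) (r + D * s) S := by
  ext n
  simp only [mem_pull]
  ring_nf

theorem pull_one_zero (S : Set ℤ) : pull 1 0 S = S := by
  ext n
  simp [mem_pull]

theorem act_pull (D r : ℤ) (p : Ultrafilter ℤ) (S : Set ℤ) :
    act p (pull D r S) = pull D r (act (p.map (D * ·)) S) := by
  ext n
  simp only [mem_act, mem_pull, Ultrafilter.coe_map, eventually_map]
  ring_nf

theorem Commuting.pull {S : Set ℤ} (hS : Commuting S) (D r : ℤ) :
    Commuting (pull D r S) := fun p q => by
  simp only [act_pull, hS (p.map (D * ·)) (q.map (D * ·))]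

/-- Invariance of a set of integers under translation by `T`. -/
def Periodic (T : ℤ) (S : Set ℤ) : Prop := ∀ n, n + T ∈ S ↔ n ∈ S

theorem Periodic.add_mul {T : ℤ} {S : Set ℤ} (h : Periodic T S) (n k : ℤ) :
    n + T * k ∈ S ↔ n ∈ S := by
  induction k using Int.induction_on with
  | zero => simp
  | succ i ih => rw [← ih, ← h (n + T * i)]; ring_nf
  | pred i ih => rw [← ih, ← h (n + T * (-i - 1))]; ring_nf

theorem Periodic.iff_of_dvd {T : ℤ} {S : Set ℤ} (h : Periodic T S) {m n : ℤ} (hmn : T ∣ m - n) :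
    m ∈ S ↔ n ∈ S := by
  obtain ⟨k, hk⟩ := hmn
  rw [show m = n + T * k by linarith, h.add_mul]

theorem exists_residue {T : ℤ} (hT : 0 < T) (p : Ultrafilter ℤ) :
    ∃ c : ℤ, ∀ᶠ x in (p : Filter ℤ), T ∣ x - c := by
  have : ∀ᶠ x in (p : Filter ℤ), ∃ c ∈ Finset.Ico 0 T, T ∣ x - c :=
    Eventually.of_forall fun x => ⟨x % T, Finset.mem_Ico.2 ⟨Int.emod_nonneg _ hT.ne',
      Int.emod_lt_of_pos _ hT⟩, Int.dvd_self_sub_emod⟩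
  have h2 := (Ultrafilter.eventually_exists_mem_iff (Finset.finite_toSet (Finset.Ico 0 T))
    (P := fun c x => T ∣ x - c)).1 (by simpa using this)
  obtain ⟨c, -, hc⟩ := h2
  exact ⟨c, hc⟩

theorem Periodic.act_eq {T : ℤ} {S : Set ℤ} (h : Periodic T S) {p : Ultrafilter ℤ} {c : ℤ}
    (hc : ∀ᶠ x in (p : Filter ℤ), T ∣ x - c) : act p S = {n | n + c ∈ S} := by
  ext n
  rw [mem_act, Set.mem_ofPred_eq, ← eventually_const_iff (p := p) (P := n + c ∈ S)]
  refine eventually_congr (hc.mono fun x hx => h.iff_of_dvd ?_)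
  simpa using hx

theorem Periodic.translate {T : ℤ} {S : Set ℤ} (h : Periodic T S) (c : ℤ) :
    Periodic T {n | n + c ∈ S} := fun n => by
  simp only [Set.mem_ofPred_eq]
  rw [← h (n + c)]
  ring_nf

theorem Periodic.commuting {T : ℤ} (hT : 0 < T) {S : Set ℤ} (h : Periodic T S) :
    Commuting S := fun p q => by
  obtain ⟨a, ha⟩ := exists_residue hT p
  obtain ⟨b, hb⟩ := exists_residue hT q
  rw [h.act_eq ha, h.act_eq hb, (h.translate a).act_eq hb, (h.translate b).act_eq ha]
  ext n
  simp only [Set.mem_ofPred_eq]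
  ring_nf

/-! ### Idempotent ultrafilters and the periodic part of a set -/

/-- Idempotency of an ultrafilter, phrased through its limit operator. -/
def IsIdem (s : Ultrafilter ℤ) : Prop := ∀ S, act s (act s S) = act s S

/-- An idempotent ultrafilter on the negative integers with one on the positive integers. -/
structure IdemPair (s t : Ultrafilter ℤ) : Prop where
  idem_left : IsIdem s
  idem_right : IsIdem t
  neg_left : ∀ᶠ x in (s : Filter ℤ), x < 0
  pos_right : ∀ᶠ x in (t : Filter ℤ), 0 < x

theorem mem_FS_geometric {t Q z : ℤ} {a : Stream' ℤ} (hz : z ∈ Hindman.FS a) :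
    ∀ j : ℕ, (∀ n, a.get n = t * Q ^ (n + j)) →
      ∃ I : Finset ℕ, I.Nonempty ∧ (∀ i ∈ I, j ≤ i) ∧ z = ∑ i ∈ I, t * Q ^ i := by
  induction hz with
  | head' a =>
    intro j ha
    refine ⟨{j}, by simp, by simp, ?_⟩
    have := ha 0
    simpa [Stream'.head] using this
  | tail' a m _ ih =>
    intro j ha
    obtain ⟨I, hI, hj, rfl⟩ := ih (j + 1) fun n => by
      rw [Stream'.get_tail, ha]; ring_nf
    exact ⟨I, hI, fun i hi => (Nat.le_succ j).trans (hj i hi), rfl⟩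
  | cons' a m _ ih =>
    intro j ha
    obtain ⟨I, hI, hj, rfl⟩ := ih (j + 1) fun n => by
      rw [Stream'.get_tail, ha]; ring_nf
    have hjI : j ∉ I := fun h => by have := hj j h; omega
    refine ⟨insert j I, by simp, ?_, ?_⟩
    · intro i hi
      rcases Finset.mem_insert.1 hi with rfl | hi
      · exact le_rfl
      · exact (Nat.le_succ j).trans (hj i hi)
    · rw [Finset.sum_insert hjI]
      have := ha 0
      simp only [zero_add] at this
      rw [← this]

theorem exists_idem_geometric (t Q : ℤ) :
    ∃ s : Ultrafilter ℤ, IsIdem s ∧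
      ∀ᶠ z in (s : Filter ℤ), ∃ I : Finset ℕ, I.Nonempty ∧ z = ∑ i ∈ I, t * Q ^ i := by
  obtain ⟨s, hs, hFS⟩ := Hindman.exists_idempotent_ultrafilter_le_FS (fun n => t * Q ^ n : Stream' ℤ)
  refine ⟨s, fun S => ?_, hFS.mono fun z hz => ?_⟩
  · rw [← act_add]
    exact congrArg (fun u => act u S) hs
  · obtain ⟨I, hI, -, h⟩ := mem_FS_geometric (t := t) (Q := Q) hz 0 (fun n => rfl)
    exact ⟨I, hI, h⟩

theorem exists_idemPair_geometric {t t' Q : ℤ} (ht : t < 0) (ht' : 0 < t') (hQ : 0 < Q) :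
    ∃ s s' : Ultrafilter ℤ, IdemPair s s' ∧
      (∀ᶠ z in (s : Filter ℤ), ∃ I : Finset ℕ, z = ∑ i ∈ I, t * Q ^ i) ∧
      (∀ᶠ z in (s' : Filter ℤ), ∃ I : Finset ℕ, z = ∑ i ∈ I, t' * Q ^ i) := by
  obtain ⟨s, hs, h⟩ := exists_idem_geometric t Q
  obtain ⟨s', hs', h'⟩ := exists_idem_geometric t' Q
  refine ⟨s, s', ⟨hs, hs', h.mono ?_, h'.mono ?_⟩, h.mono ?_, h'.mono ?_⟩
  · rintro z ⟨I, hI, rfl⟩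
    exact Finset.sum_neg (fun i _ => mul_neg_of_neg_of_pos ht (pow_pos hQ i)) hI
  · rintro z ⟨I, hI, rfl⟩
    exact Finset.sum_pos (fun i _ => mul_pos ht' (pow_pos hQ i)) hI
  · rintro z ⟨I, hI, h⟩
    exact ⟨I, h⟩
  · rintro z ⟨I, hI, h⟩
    exact ⟨I, h⟩

theorem IsIdem.map_mul {s : Ultrafilter ℤ} (hs : IsIdem s) (D : ℤ) :
    IsIdem (s.map (D * ·)) := fun S => by
  ext n
  have key := congrArg (fun X : Set ℤ => (0 : ℤ) ∈ X) (hs (pull D n S))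
  simpa only [mem_act, mem_pull, Ultrafilter.coe_map, eventually_map, mul_add, mul_zero, zero_add,
    eq_iff_iff, ← add_assoc] using key

theorem IdemPair.map_mul {s t : Ultrafilter ℤ} (h : IdemPair s t) {D : ℤ} (hD : 0 < D) :
    IdemPair (s.map (D * ·)) (t.map (D * ·)) where
  idem_left := h.idem_left.map_mul D
  idem_right := h.idem_right.map_mul D
  neg_left := by
    simp only [Ultrafilter.coe_map, eventually_map]
    exact h.neg_left.mono fun x hx => mul_neg_of_pos_of_neg hD hx
  pos_right := by
    simp only [Ultrafilter.coe_map, eventually_map]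
    exact h.pos_right.mono fun x hx => mul_pos hD hx

theorem IsIdem.eventually_gt {s : Ultrafilter ℤ} (hs : IsIdem s)
    (hpos : ∀ᶠ x in (s : Filter ℤ), 0 < x) (m : ℕ) : ∀ᶠ x in (s : Filter ℤ), (m : ℤ) < x := by
  induction m with
  | zero => simpa using hpos
  | succ m ih =>
    have key : (0 : ℤ) ∈ act s (act s {x | ((m + 1 : ℕ) : ℤ) < x}) := by
      refine hpos.mono fun x hx => ih.mono fun y hy => ?_
      change ((m + 1 : ℕ) : ℤ) < 0 + x + y
      push_cast
      linarith
    rw [hs, mem_act] at key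
    simpa using key

theorem IsIdem.eventually_lt {s : Ultrafilter ℤ} (hs : IsIdem s)
    (hneg : ∀ᶠ x in (s : Filter ℤ), x < 0) (m : ℕ) : ∀ᶠ x in (s : Filter ℤ), x < -(m : ℤ) := by
  have h := (hs.map_mul (-1)).eventually_gt
    (by simpa only [Ultrafilter.coe_map, eventually_map, neg_one_mul, Int.neg_pos] using hneg) m
  simp only [Ultrafilter.coe_map, eventually_map, neg_one_mul] at h
  exact h.mono fun x hx => by linarith

theorem IsIdem.act_periodic {s : Ultrafilter ℤ} (hs : IsIdem s) {T : ℤ} (hT : 0 < T) {B : Set ℤ}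
    (hB : Periodic T B) : act s B = B := by
  obtain ⟨c, hc⟩ := exists_residue hT s
  have h := hs B
  rw [hB.act_eq hc, (hB.translate c).act_eq hc] at h
  rw [hB.act_eq hc]
  ext n
  have := Set.ext_iff.1 h (n - c)
  simp only [Set.mem_ofPred_eq] at this ⊢
  simpa using this

/-- Two limit points that agree far to one side coincide if `s` fixes the set. -/
theorem act_eq_act_of_act_eq {B : Set ℤ} (hB : Commuting B) {s : Ultrafilter ℤ}
    (hs : act s B = B) {q q' : Ultrafilter ℤ}
    (h : act s (act q B) = act s (act q' B)) : act q B = act q' B := by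
  rwa [hB s q, hB s q', hs] at h

theorem exists_determining_window {B : Set ℤ} (hB : Commuting B) {s : Ultrafilter ℤ}
    (hs : IsIdem s) (hneg : ∀ᶠ x in (s : Filter ℤ), x < 0) (hsB : act s B = B) :
    ∃ L : ℕ, ∀ i j : ℤ, (∀ n : ℕ, n < L → (i - (n + 1) ∈ B ↔ j - (n + 1) ∈ B)) →
      (i ∈ B ↔ j ∈ B) := by
  by_contra! hcon
  choose i j hij hne using hcon
  have hne' : ∀ L, ¬ (i L ∈ B ↔ j L ∈ B) := fun L => by
    have := hne L
    tauto
  let ω := hyperfilter ℕ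
  have heq : act (ω.map i) B = act (ω.map j) B := by
    refine act_eq_act_of_act_eq hB hsB ?_
    ext n
    refine eventually_iff_of_eventually ?_
    refine (hs.eventually_lt hneg n.natAbs).mono fun x hx => ?_
    simp only [mem_act, Ultrafilter.coe_map, eventually_map]
    refine eventually_iff_of_eventually ?_
    have hlarge : ∀ᶠ L in (ω : Filter ℕ), (n + x).natAbs < L := by
      have : ∀ᶠ L in atTop, (n + x).natAbs < L := eventually_gt_atTop _
      exact Nat.hyperfilter_le_atTop this
    refine hlarge.mono fun L hL => ?_
    have := hij L ((n + x).natAbs - 1) (by omega)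
    rwa [show i L - (((n + x).natAbs - 1 : ℕ) + 1 : ℤ) = n + x + i L by omega,
      show j L - (((n + x).natAbs - 1 : ℕ) + 1 : ℤ) = n + x + j L by omega] at this
  have h0 := Set.ext_iff.1 heq 0
  simp only [mem_act, Ultrafilter.coe_map, eventually_map, zero_add] at h0
  by_cases hi : ∀ᶠ L in (ω : Filter ℕ), i L ∈ B
  · obtain ⟨L, h1, h2⟩ := (hi.and (h0.1 hi)).exists
    exact hne' L (iff_of_true h1 h2)
  · have hj : ¬ ∀ᶠ L in (ω : Filter ℕ), j L ∈ B := fun h => hi (h0.2 h)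
    rw [← Ultrafilter.eventually_not] at hi hj
    obtain ⟨L, h1, h2⟩ := (hi.and hj).exists
    exact hne' L (iff_of_false h1 h2)

theorem periodic_of_act_eq {B : Set ℤ} (hB : Commuting B) {s t : Ultrafilter ℤ}
    (hst : IdemPair s t) (hsB : act s B = B) (htB : act t B = B) :
    ∃ T : ℤ, 0 < T ∧ Periodic T B := by
  obtain ⟨L, hL⟩ := exists_determining_window hB hst.idem_left hst.neg_left hsB
  obtain ⟨i, j, hij, hw⟩ : ∃ i j : ℕ, i < j ∧ ∀ n : ℕ, n < L →
      ((i : ℤ) - (n + 1) ∈ B ↔ (j : ℤ) - (n + 1) ∈ B) := by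
    classical
    obtain ⟨i, j, hne, heq⟩ := Finite.exists_ne_map_eq_of_infinite
      (fun i : ℕ => fun n : Fin L => ((i : ℤ) - (n + 1) ∈ B))
    have hw : ∀ n : ℕ, n < L → ((i : ℤ) - (n + 1) ∈ B ↔ (j : ℤ) - (n + 1) ∈ B) :=
      fun n hn => iff_of_eq (congrFun heq ⟨n, hn⟩)
    rcases lt_or_gt_of_ne hne with h | h
    · exact ⟨i, j, h, hw⟩
    · exact ⟨j, i, h, fun n hn => (hw n hn).symm⟩
  have hfwd : ∀ m : ℕ, ((i : ℤ) + m ∈ B ↔ (j : ℤ) + m ∈ B) := by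
    intro m
    induction m using Nat.strong_induction_on with
    | _ m ih =>
      refine hL _ _ fun n hn => ?_
      by_cases hnm : n < m
      · have := ih (m - (n + 1)) (by omega)
        rwa [show (i : ℤ) + (m - (n + 1) : ℕ) = i + m - (n + 1) by omega,
          show (j : ℤ) + (m - (n + 1) : ℕ) = j + m - (n + 1) by omega] at this
      · have := hw (n - m) (by omega)
        rwa [show (i : ℤ) - ((n - m : ℕ) + 1) = i + m - (n + 1) by omega,
          show (j : ℤ) - ((n - m : ℕ) + 1) = j + m - (n + 1) by omega] at this
  refine ⟨(j : ℤ) - i, by omega, ?_⟩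
  have heq : act (pure ((j : ℤ) - i)) B = act (pure 0) B := by
    refine act_eq_act_of_act_eq hB htB ?_
    ext n
    refine eventually_iff_of_eventually ?_
    refine (hst.idem_right.eventually_gt hst.pos_right (i + n.natAbs)).mono fun x hx => ?_
    rw [act_pure, act_pure]
    have := hfwd (n + x - i).toNat
    rw [Int.toNat_of_nonneg (by omega)] at this
    simp only [Set.mem_ofPred_eq]
    rw [show n + x + (j - i) = j + (n + x - i) by ring, ← this]
    ring_nf
  intro n
  have := Set.ext_iff.1 heq n
  simpa [act_pure] using this

theorem exists_periodic_act {A : Set ℤ} (hA : Commuting A) {s t : Ultrafilter ℤ}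
    (hst : IdemPair s t) : ∃ T : ℤ, 0 < T ∧ Periodic T (act s (act t A)) := by
  refine periodic_of_act_eq ((hA.act t).act s) hst ?_ ?_
  · rw [hst.idem_left]
  · rw [hA.act t t s, hst.idem_right]

/-- Every idempotent pair annihilates `S`. -/
def Negligible (S : Set ℤ) : Prop := ∀ s t, IdemPair s t → act s (act t S) = ∅

theorem exists_periodic_negligible {A : Set ℤ} (hA : Commuting A) :
    ∃ T : ℤ, 0 < T ∧ ∃ P : Set ℤ, Periodic T P ∧ Negligible (symmDiff A P) := by
  obtain ⟨s, t, hst, -, -⟩ := exists_idemPair_geometric (t := -1) (t' := 1) (Q := 1)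
    (by norm_num) (by norm_num) (by norm_num)
  obtain ⟨T, hT, hP⟩ := exists_periodic_act hA hst
  refine ⟨T, hT, _, hP, fun s' t' hst' => ?_⟩
  obtain ⟨T', hT', hP'⟩ := exists_periodic_act hA hst'
  rw [act_symmDiff, act_symmDiff, hst'.idem_right.act_periodic hT hP,
    hst'.idem_left.act_periodic hT hP]
  have h1 : act s' (act t' (act s (act t A))) = act s (act t A) := by
    rw [hst'.idem_right.act_periodic hT hP, hst'.idem_left.act_periodic hT hP]
  have h2 : act s (act t (act s' (act t' A))) = act s' (act t' A) := by
    rw [hst.idem_right.act_periodic hT' hP', hst.idem_left.act_periodic hT' hP']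
  have h3 : act s' (act t' (act s (act t A))) = act s (act t (act s' (act t' A))) := by
    rw [(hA.act t) t' s, hA t' t, ((hA.act t').act t) s' s, (hA.act t') s' t]
  rw [← h2, ← h3, h1]
  exact symmDiff_self _

theorem Negligible.pull {S : Set ℤ} (hS : Negligible S) {D : ℤ} (hD : 0 < D) (r : ℤ) :
    Negligible (pull D r S) := fun s t hst => by
  rw [act_pull, act_pull, hS _ _ (hst.map_mul hD)]
  rfl

/-! ### Kernel elements with two loops -/

theorem sum_digits_mem {S : Set ℤ} {Q : ℤ} {e : ℕ → ℤ} (he : ∀ i, pull Q (e i) S = S) (l : ℕ) :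
    ∀ n ∈ S, ∑ i ∈ Finset.range l, e i * Q ^ i + Q ^ l * n ∈ S := by
  induction l with
  | zero => intro n hn; simpa using hn
  | succ l ih =>
    intro n hn
    rw [← he l, mem_pull] at hn
    have := ih _ hn
    rw [Finset.sum_range_succ]
    convert this using 1
    ring

theorem sum_ite_mem_range {I : Finset ℕ} {l : ℕ} (hI : I ⊆ Finset.range l) (f : ℕ → ℤ) (t : ℤ) :
    ∑ i ∈ Finset.range l, (if i ∈ I then t else 0) * f i = ∑ i ∈ I, t * f i := by
  rw [← Finset.sum_subset hI]
  · exact Finset.sum_congr rfl fun i hi => by rw [if_pos hi]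
  · intro i _ hi
    rw [if_neg hi, zero_mul]

theorem eventually_subset_range (I : Finset ℕ) :
    ∀ᶠ l in (hyperfilter ℕ : Filter ℕ), I ⊆ Finset.range l := by
  have : ∀ᶠ l in atTop, I ⊆ Finset.range l :=
    tendsto_finset_range.eventually (eventually_ge_atTop I)
  exact Nat.hyperfilter_le_atTop this

theorem eq_empty_of_two_loops_aux {S : Set ℤ} (hS : Commuting S) (hN : Negligible S)
    {D u v : ℤ} (hD : 0 < D) (huv : u < v) (hu : pull D u S = S) (hv : pull D v S = S) :
    S = ∅ := by
  by_contra hne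
  obtain ⟨n₀, hn₀⟩ := Set.nonempty_iff_ne_empty.2 hne
  obtain ⟨s, s', hss', hs, hs'⟩ := exists_idemPair_geometric (t := D * (u - v)) (t' := v - u)
    (Q := D * D) (mul_neg_of_pos_of_neg hD (by linarith)) (by linarith) (mul_pos hD hD)
  have inv : ∀ x y, pull D x S = S → pull D y S = S → pull (D * D) (x + D * y) S = S :=
    fun x y hx hy => by rw [← pull_pull, hx, hy]
  let x : ℕ → ℤ := fun l =>
    ∑ i ∈ Finset.range l, (u + D * v) * (D * D) ^ i + (D * D) ^ l * n₀
  let p : Ultrafilter ℤ := (hyperfilter ℕ).map x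
  have hmem : (0 : ℤ) ∈ act s (act s' (act p S)) := by
    refine hs.mono fun z hz => hs'.mono fun z' hz' => ?_
    obtain ⟨J, rfl⟩ := hz
    obtain ⟨I, rfl⟩ := hz'
    simp only [mem_act, p, Ultrafilter.coe_map, eventually_map]
    filter_upwards [eventually_subset_range I, eventually_subset_range J] with l hI hJ
    have key := sum_digits_mem (S := S) (Q := D * D) (e := fun i => (u + D * v) +
      (if i ∈ I then v - u else 0) + (if i ∈ J then D * (u - v) else 0)) (fun i => by
        by_cases h1 : i ∈ I <;> by_cases h2 : i ∈ J <;> simp only [h1, h2, if_true, if_false]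
        · convert inv v u hv hu using 2; ring
        · convert inv v v hv hv using 2; ring
        · convert inv u u hu hu using 2; ring
        · convert inv u v hu hv using 2; ring) l n₀ hn₀
    simp only [add_mul, Finset.sum_add_distrib, sum_ite_mem_range hI, sum_ite_mem_range hJ] at key
    convert key using 1
    simp only [x, add_mul, Finset.sum_add_distrib]
    ring
  rw [hS s' p, (hS.act s') s p, hN s s' hss', act_empty] at hmem
  exact hmem

theorem eq_empty_of_two_loops {S : Set ℤ} (hS : Commuting S) (hN : Negligible S)
    {D u v : ℤ} (hD : 0 < D) (huv : u ≠ v) (hu : pull D u S = S) (hv : pull D v S = S) :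
    S = ∅ := by
  rcases lt_or_gt_of_ne huv with h | h
  · exact eq_empty_of_two_loops_aux hS hN hD h hu hv
  · exact eq_empty_of_two_loops_aux hS hN hD h hv hu

/-! ### Repunits and patterns -/

/-- The base-`D` number `1 + D + ⋯ + D ^ (m - 1)`. -/
def repunit (D : ℤ) (m : ℕ) : ℤ := ∑ i ∈ Finset.range m, D ^ i

theorem repunit_zero (D : ℤ) : repunit D 0 = 0 := by simp [repunit]

theorem repunit_one (D : ℤ) : repunit D 1 = 1 := by simp [repunit]

theorem repunit_add (D : ℤ) (m n : ℕ) :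
    repunit D (m + n) = repunit D m + D ^ m * repunit D n := by
  simp only [repunit, Finset.sum_range_add, Finset.mul_sum, pow_add]

theorem repunit_mul (D : ℤ) (m n : ℕ) :
    repunit D (m * n) = repunit D m * repunit (D ^ m) n := by
  induction n with
  | zero => simp [repunit_zero]
  | succ n ih =>
    rw [Nat.mul_succ, repunit_add, ih, repunit_add _ n 1, repunit_one, ← pow_mul]
    ring

theorem pow_eq_repunit (D : ℤ) (m : ℕ) : D ^ m = 1 + (D - 1) * repunit D m := by
  rw [repunit, mul_comm, geom_sum_mul]
  ring

theorem repunit_nonneg {D : ℤ} (hD : 0 ≤ D) (m : ℕ) : 0 ≤ repunit D m :=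
  Finset.sum_nonneg fun i _ => pow_nonneg hD i

theorem repunit_le {D : ℤ} (hD : 2 ≤ D) (m : ℕ) : repunit D m ≤ D ^ m := by
  have h := repunit_nonneg (by linarith : 0 ≤ D) m
  rw [pow_eq_repunit]
  nlinarith

theorem pull_iterate {S : Set ℤ} {D r : ℤ} (h : pull D r S = S) (m : ℕ) :
    pull (D ^ m) (r * repunit D m) S = S := by
  induction m with
  | zero => simp [repunit_zero, pull_one_zero]
  | succ m ih =>
    rw [repunit_add, repunit_one, mul_add, mul_one, mul_comm r (D ^ m), pow_succ, ← pull_pull, ih, h]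

/-- The values `β + ∑ aᵢ (1 + D + ⋯ + D ^ (mᵢ - 1))` over all exponents `mᵢ`. -/
def pattern (D β : ℤ) (I : Finset ℕ) (a : ℕ → ℤ) : Set ℤ :=
  {x | ∃ m : ℕ → ℕ, x = β + ∑ i ∈ I, a i * repunit D (m i)}

/-- Sets covered by finitely many patterns in base `D`. -/
def Covered (D : ℤ) (S : Set ℤ) : Prop :=
  ∃ F : Set (Set ℤ), F.Finite ∧ (∀ E ∈ F, ∃ β I a, E = pattern D β I a) ∧ S ⊆ ⋃₀ F

theorem Covered.mono {D : ℤ} {S T : Set ℤ} (hT : Covered D T) (h : S ⊆ T) : Covered D S := by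
  obtain ⟨F, hF, hE, hc⟩ := hT
  exact ⟨F, hF, hE, h.trans hc⟩

theorem covered_pattern (D β : ℤ) (I : Finset ℕ) (a : ℕ → ℤ) : Covered D (pattern D β I a) :=
  ⟨{pattern D β I a}, Set.finite_singleton _, by rintro E rfl; exact ⟨β, I, a, rfl⟩, by simp⟩

theorem covered_empty (D : ℤ) : Covered D ∅ := ⟨∅, Set.finite_empty, by simp, by simp⟩

theorem covered_singleton (D x : ℤ) : Covered D {x} :=
  (covered_pattern D x ∅ 0).mono (by rintro _ rfl; exact ⟨0, by simp⟩)

theorem Covered.union {D : ℤ} {S T : Set ℤ} (hS : Covered D S) (hT : Covered D T) :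
    Covered D (S ∪ T) := by
  obtain ⟨F, hF, hE, hc⟩ := hS
  obtain ⟨F', hF', hE', hc'⟩ := hT
  refine ⟨F ∪ F', hF.union hF', ?_, ?_⟩
  · rintro E (h | h)
    exacts [hE E h, hE' E h]
  · rw [Set.sUnion_union]
    exact Set.union_subset_union hc hc'

theorem Covered.biUnion {D : ℤ} {ι : Type*} (s : Finset ι) {f : ι → Set ℤ}
    (h : ∀ i ∈ s, Covered D (f i)) : Covered D (⋃ i ∈ s, f i) := by
  classical
  induction s using Finset.induction_on with
  | empty => simpa using covered_empty D
  | insert i s _ ih =>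
    rw [Finset.set_biUnion_insert]
    exact (h i (by simp)).union (ih fun j hj => h j (by simp [hj]))

theorem Covered.map {D : ℤ} {S : Set ℤ} (hS : Covered D S) (R : ℤ → ℤ → Prop)
    (hR : ∀ β I a, ∃ β' I' a', {y | ∃ x ∈ pattern D β I a, R x y} ⊆ pattern D β' I' a') :
    Covered D {y | ∃ x ∈ S, R x y} := by
  obtain ⟨F, hF, hE, hc⟩ := hS
  have h1 : Covered D (⋃ E ∈ hF.toFinset, {y | ∃ x ∈ E, R x y}) := by
    refine Covered.biUnion _ fun E hEF => ?_
    obtain ⟨β, I, a, rfl⟩ := hE E (by simpa using hEF)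
    obtain ⟨β', I', a', h⟩ := hR β I a
    exact (covered_pattern _ _ _ _).mono h
  refine h1.mono ?_
  rintro y ⟨x, hx, hxy⟩
  obtain ⟨E, hEF, hxE⟩ := hc hx
  simp only [Set.mem_iUnion]
  exact ⟨E, by simpa using hEF, x, hxE, hxy⟩

theorem Covered.image {D : ℤ} {S : Set ℤ} (hS : Covered D S) (r E : ℤ) :
    Covered D {y | ∃ x ∈ S, y = r + E * x} := by
  refine hS.map (fun x y => y = r + E * x) fun β I a => ⟨r + E * β, I, fun i => E * a i, ?_⟩
  rintro y ⟨x, ⟨m, rfl⟩, rfl⟩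
  refine ⟨m, ?_⟩
  rw [mul_add, Finset.mul_sum]
  simp only [mul_assoc]
  ring

theorem Covered.iterate_image {D : ℤ} {S : Set ℤ} (hS : Covered D S) (w : ℤ) :
    Covered D {y | ∃ x ∈ S, ∃ n : ℕ, y = w * repunit D n + D ^ n * x} := by
  refine hS.map (fun x y => ∃ n : ℕ, y = w * repunit D n + D ^ n * x) fun β I a => ?_
  obtain ⟨j, hj⟩ := Infinite.exists_notMem_finset I
  refine ⟨β, insert j I, Function.update a j (w + (D - 1) * β - ∑ i ∈ I, a i), ?_⟩
  rintro y ⟨x, ⟨m, rfl⟩, n, rfl⟩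
  refine ⟨Function.update (fun i => n + m i) j n, ?_⟩
  rw [Finset.sum_insert hj, Function.update_self, Function.update_self]
  have : ∑ i ∈ I, Function.update a j (w + (D - 1) * β - ∑ i ∈ I, a i) i *
      repunit D (Function.update (fun i => n + m i) j n i) =
      ∑ i ∈ I, (a i * repunit D n + D ^ n * (a i * repunit D (m i))) := by
    refine Finset.sum_congr rfl fun i hi => ?_
    have hij : i ≠ j := fun h => hj (h ▸ hi)
    rw [Function.update_of_ne hij, Function.update_of_ne hij, repunit_add]
    ring
  rw [this, Finset.sum_add_distrib, ← Finset.sum_mul, ← Finset.mul_sum, mul_add]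
  have h := pow_eq_repunit D n
  linear_combination β * h

/-! ### Finite kernels -/

/-- All the sets `pull (d ^ k) r S` with `|r| ≤ C * d ^ k` together form a finite family. -/
def FiniteKernel (d : ℤ) (S : Set ℤ) : Prop :=
  ∀ C : ℕ, {T | ∃ (k : ℕ) (r : ℤ), |r| ≤ C * d ^ k ∧ T = pull (d ^ k) r S}.Finite

/-- The base-`d` kernel of `S`. -/
def kernel (d : ℤ) (S : Set ℤ) : Set (Set ℤ) :=
  {T | ∃ (k : ℕ) (r : ℤ), 0 ≤ r ∧ r < d ^ k ∧ T = pull (d ^ k) r S}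

theorem mem_kernel_self (d : ℤ) (S : Set ℤ) : S ∈ kernel d S :=
  ⟨0, 0, le_rfl, by simp, by rw [pow_zero, pull_one_zero]⟩

theorem kernel_subset {d : ℤ} (hd : 0 < d) {S T : Set ℤ} (h : T ∈ kernel d S) :
    kernel d T ⊆ kernel d S := by
  obtain ⟨k, r, h0, h1, rfl⟩ := h
  rintro _ ⟨j, s, h2, h3, rfl⟩
  have hk : 0 < d ^ k := pow_pos hd k
  refine ⟨k + j, r + d ^ k * s, by positivity, ?_, by rw [pull_pull, pow_add]⟩
  rw [pow_add]
  nlinarith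

theorem FiniteKernel.kernel_finite {d : ℤ} {S : Set ℤ} (h : FiniteKernel d S) :
    (kernel d S).Finite := by
  refine (h 1).subset ?_
  rintro _ ⟨k, r, h0, h1, rfl⟩
  exact ⟨k, r, by rw [abs_of_nonneg h0]; push_cast; linarith, rfl⟩

theorem FiniteKernel.of_kernel_finite {d : ℤ} (hd : 0 < d) {S : Set ℤ}
    (h : (kernel d S).Finite) : FiniteKernel d S := by
  intro C
  refine ((Set.finite_Icc (-(C + 1) : ℤ) (C + 1)).image2 (fun c T => pull 1 c T) h).subset ?_
  rintro _ ⟨k, r, hr, rfl⟩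
  have hk : 0 < d ^ k := pow_pos hd k
  have h1 := Int.emod_add_mul_ediv r (d ^ k)
  have h2 := Int.emod_nonneg r hk.ne'
  have h3 := Int.emod_lt_of_pos r hk
  rw [abs_le] at hr
  refine ⟨r / d ^ k, ⟨?_, ?_⟩, pull (d ^ k) (r % d ^ k) S, ⟨k, _, h2, h3, rfl⟩, ?_⟩
  · nlinarith
  · nlinarith
  · change pull 1 (r / d ^ k) (pull (d ^ k) (r % d ^ k) S) = _
    rw [pull_pull, mul_one, h1]

theorem pull_symmDiff (D r : ℤ) (S T : Set ℤ) :
    pull D r (symmDiff S T) = symmDiff (pull D r S) (pull D r T) := rfl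

theorem FiniteKernel.symmDiff {d : ℤ} {S T : Set ℤ} (hS : FiniteKernel d S)
    (hT : FiniteKernel d T) : FiniteKernel d (symmDiff S T) := by
  intro C
  refine ((hS C).image2 (fun X Y => _root_.symmDiff X Y) (hT C)).subset ?_
  rintro _ ⟨k, r, hr, rfl⟩
  exact ⟨_, ⟨k, r, hr, rfl⟩, _, ⟨k, r, hr, rfl⟩, (pull_symmDiff _ _ _ _).symm⟩

theorem FiniteKernel.pull {d : ℤ} (hd : 0 < d) {S : Set ℤ} (hS : FiniteKernel d S) (j : ℕ)
    (b : ℤ) : FiniteKernel d (pull (d ^ j) b S) := by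
  intro C
  refine (hS (b.natAbs + C)).subset ?_
  rintro _ ⟨k, r, hr, rfl⟩
  refine ⟨j + k, b + d ^ j * r, ?_, by rw [pull_pull, pow_add]⟩
  have hj : 0 < d ^ j := pow_pos hd j
  have h1 : 1 ≤ d ^ (j + k) := pow_pos hd _
  calc |b + d ^ j * r| ≤ |b| + |d ^ j * r| := abs_add_le _ _
    _ = |b| * 1 + d ^ j * |r| := by rw [abs_mul, abs_of_pos hj, mul_one]
    _ ≤ |b| * d ^ (j + k) + d ^ j * (C * d ^ k) := by gcongr
    _ = ((b.natAbs + C : ℕ) : ℤ) * d ^ (j + k) := by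
      rw [Nat.cast_add, Int.natCast_natAbs, pow_add]; ring

theorem Periodic.finiteKernel {d T : ℤ} (hT : 0 < T) {S : Set ℤ} (hS : Periodic T S) :
    FiniteKernel d S := by
  intro C
  refine ((Set.finite_Ico 0 T).powerset.image fun R => {n : ℤ | n % T ∈ R}).subset ?_
  rintro _ ⟨k, r, -, rfl⟩
  refine ⟨StableAutomatic.pull (d ^ k) r S ∩ Set.Ico 0 T, Set.inter_subset_right, ?_⟩
  ext n
  simp only [Set.mem_ofPred_eq, Set.mem_inter_iff, Set.mem_Ico, Int.emod_nonneg n hT.ne',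
    Int.emod_lt_of_pos n hT, and_self, and_true, mem_pull]
  refine hS.iff_of_dvd ?_
  have : T ∣ n % T - n := by
    rw [← dvd_neg, neg_sub]
    exact Int.dvd_self_sub_emod
  rw [add_sub_add_left_eq_sub, ← mul_sub]
  exact this.mul_left (d ^ k)

theorem evalZ_append (d : ℤ) (σ ρ : List ℤ) :
    evalZ d (σ ++ ρ) = evalZ d σ + d ^ σ.length * evalZ d ρ := by
  induction σ with
  | nil => simp [evalZ]
  | cons k σ ih =>
    rw [List.cons_append, evalZ, evalZ, ih, List.length_cons, pow_succ]
    ring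

theorem exists_digits {d : ℕ} (hd : 2 ≤ d) (k : ℕ) : ∀ r : ℤ, 0 ≤ r → r < (d : ℤ) ^ k →
    ∃ σ : List ℤ, σ.length = k ∧ (∀ x ∈ σ, x.natAbs ≤ d - 1) ∧ evalZ d σ = r := by
  induction k with
  | zero =>
    intro r h0 h1
    exact ⟨[], rfl, by simp, by simp [evalZ] at h1 ⊢; omega⟩
  | succ k ih =>
    intro r h0 h1
    have hd0 : (0 : ℤ) < d := by omega
    have h2 := Int.emod_add_mul_ediv r d
    have h3 := Int.emod_nonneg r hd0.ne'
    have h4 := Int.emod_lt_of_pos r hd0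
    obtain ⟨σ, hσ, hσd, he⟩ := ih (r / d) (Int.ediv_nonneg h0 hd0.le)
      (Int.ediv_lt_of_lt_mul hd0 (by rwa [pow_succ] at h1))
    refine ⟨r % d :: σ, by simp [hσ], ?_, ?_⟩
    · intro x hx
      rcases List.mem_cons.1 hx with rfl | hx
      · omega
      · exact hσd x hx
    · rw [evalZ, he, h2]

theorem evalZ_map_neg (d : ℤ) (σ : List ℤ) : evalZ d (σ.map (- ·)) = - evalZ d σ := by
  induction σ with
  | nil => rfl
  | cons k σ ih => rw [List.map_cons, evalZ, evalZ, ih]; ring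

theorem exists_evalZ_eq {d : ℕ} (hd : 2 ≤ d) (n : ℤ) :
    ∃ σ : List ℤ, (∀ x ∈ σ, x.natAbs ≤ d - 1) ∧ evalZ d σ = n := by
  have hlt : ((n.natAbs : ℕ) : ℤ) < (d : ℤ) ^ n.natAbs := by
    exact_mod_cast Nat.lt_pow_self (by omega : 1 < d)
  obtain ⟨σ, -, hσ, he⟩ := exists_digits hd n.natAbs n.natAbs (by positivity) hlt
  rcases Int.natAbs_eq n with h | h
  · exact ⟨σ, hσ, by rw [he, ← h]⟩
  · refine ⟨σ.map (- ·), ?_, by rw [evalZ_map_neg, he, ← h]⟩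
    intro x hx
    obtain ⟨y, hy, rfl⟩ := List.mem_map.1 hx
    simpa using hσ y hy

theorem FiniteKernel.of_automatic {d : ℕ} (hd : 2 ≤ d) {A : Set ℤ} (hA : AutomaticZ d A) :
    FiniteKernel d A := by
  obtain ⟨Q, _, M, hM⟩ := hA
  refine FiniteKernel.of_kernel_finite (by omega) ?_
  refine (Set.finite_range fun q : Q => {n : ℤ | ∃ ρ : List ℤ, (∀ x ∈ ρ, x.natAbs ≤ d - 1) ∧
    evalZ d ρ = n ∧ M.evalFrom q ρ ∈ M.accept}).subset ?_
  rintro _ ⟨k, r, h0, h1, rfl⟩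
  obtain ⟨σ, hσ, hσd, rfl⟩ := exists_digits hd k r h0 h1
  have key : ∀ ρ : List ℤ, (∀ x ∈ ρ, x.natAbs ≤ d - 1) →
      (M.evalFrom (M.evalFrom M.start σ) ρ ∈ M.accept ↔
        evalZ d σ + (d : ℤ) ^ k * evalZ d ρ ∈ A) := by
    intro ρ hρ
    have h2 : σ ++ ρ ∈ M.accepts ↔ _ := Set.ext_iff.1 hM (σ ++ ρ)
    rw [DFA.mem_accepts, DFA.eval, DFA.evalFrom_of_append] at h2
    rw [h2, Set.mem_ofPred_eq, evalZ_append, hσ]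
    refine and_iff_right fun x hx => ?_
    rcases List.mem_append.1 hx with hx | hx
    exacts [hσd x hx, hρ x hx]
  refine ⟨M.evalFrom M.start σ, ?_⟩
  ext n
  simp only [Set.mem_ofPred_eq, mem_pull]
  constructor
  · rintro ⟨ρ, hρ, rfl, h⟩
    exact (key ρ hρ).1 h
  · intro h
    obtain ⟨ρ, hρ, rfl⟩ := exists_evalZ_eq hd n
    exact ⟨ρ, hρ, rfl, (key ρ hρ).2 h⟩

/-! ### Negligible sets with finite kernel are covered by patterns -/

/-- Some word of length `k` labels a loop at `S` in the kernel of `S`. -/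
def HasLoop (d : ℤ) (k : ℕ) (S : Set ℤ) : Prop :=
  ∃ w : ℤ, 0 ≤ w ∧ w < d ^ k ∧ pull (d ^ k) w S = S

theorem HasLoop.of_dvd {d : ℤ} (hd : 0 < d) {k l : ℕ} {S : Set ℤ} (h : HasLoop d k S)
    (hkl : k ∣ l) : HasLoop d l S := by
  obtain ⟨m, rfl⟩ := hkl
  obtain ⟨w, h0, h1, hw⟩ := h
  have hr := repunit_nonneg (pow_pos hd k).le m
  refine ⟨w * repunit (d ^ k) m, mul_nonneg h0 hr, ?_, by rw [pow_mul, pull_iterate hw]⟩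
  rw [pow_mul, pow_eq_repunit (d ^ k)]
  nlinarith

theorem exists_pull_eq_of_mem_kernel {d : ℤ} {S : Set ℤ} {k : ℕ} {r : ℤ}
    (h : S ∈ kernel d (pull (d ^ k) r S)) :
    ∃ (j : ℕ) (s : ℤ), 0 ≤ s ∧ s < d ^ j ∧ pull (d ^ (k + j)) (r + d ^ k * s) S = S := by
  obtain ⟨j, s, h2, h3, h⟩ := h
  rw [pull_pull, ← pow_add] at h
  exact ⟨j, s, h2, h3, h.symm⟩

theorem exists_common_loop {d : ℤ} (hd : 0 < d) {K : Set (Set ℤ)} (hK : K.Finite) :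
    ∃ Δ : ℕ, 1 ≤ Δ ∧ ∀ S ∈ K, ∀ k, 1 ≤ k → HasLoop d k S → HasLoop d Δ S := by
  have hf : ∀ S : Set ℤ, ∃ l : ℕ, 1 ≤ l ∧ ∀ k, 1 ≤ k → HasLoop d k S → HasLoop d l S := by
    intro S
    by_cases h : ∃ k, 1 ≤ k ∧ HasLoop d k S
    · obtain ⟨k, hk, h⟩ := h
      exact ⟨k, hk, fun _ _ _ => h⟩
    · exact ⟨1, le_rfl, fun k hk h' => absurd ⟨k, hk, h'⟩ h⟩
  choose f hf1 hf2 using hf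
  refine ⟨∏ S ∈ hK.toFinset, f S, Nat.one_le_iff_ne_zero.2 (Finset.prod_ne_zero_iff.2
    fun S _ => Nat.one_le_iff_ne_zero.1 (hf1 S)), fun S hS k hk h => ?_⟩
  exact (hf2 S k hk h).of_dvd hd (Finset.dvd_prod_of_mem f (by simpa using hS))

theorem mem_pull_emod {D : ℤ} {S : Set ℤ} {x : ℤ} (hx : x ∈ S) :
    x / D ∈ pull D (x % D) S := by
  rwa [mem_pull, Int.emod_add_mul_ediv]

theorem covered_of_loop {D w : ℤ} (hD : 2 ≤ D) {S B : Set ℤ}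
    (hB : Covered D B) (hSB : ∀ x ∈ S, x % D ≠ w → x ∈ B) (hw : pull D w S = S) :
    Covered D S := by
  have key : ∀ N : ℕ, ∀ x ∈ S, ((D - 1) * x + w).natAbs ≤ N → (D - 1) * x + w = 0 ∨
      ∃ y ∈ B, ∃ n : ℕ, x = w * repunit D n + D ^ n * y := by
    intro N
    induction N with
    | zero => intro x _ h; left; omega
    | succ N ih =>
      intro x hx h
      by_cases hxw : x % D = w
      · by_cases h0 : (D - 1) * x + w = 0
        · exact Or.inl h0
        right
        have h1 := Int.emod_add_mul_ediv x D
        rw [hxw] at h1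
        have hy : x / D ∈ S := by
          rw [← hw, ← hxw]
          exact mem_pull_emod hx
        generalize x / D = y at h1 hy
        have h2 : (D - 1) * x + w = D * ((D - 1) * y + w) := by rw [← h1]; ring
        rw [h2] at h h0
        have h3 : (D - 1) * y + w ≠ 0 := right_ne_zero_of_mul h0
        rw [Int.natAbs_mul] at h
        have h4 : 2 ≤ D.natAbs := by omega
        have h5 : 1 ≤ ((D - 1) * y + w).natAbs := by omega
        rcases ih y hy (by nlinarith) with h6 | ⟨y', hy', n, rfl⟩
        · exact absurd h6 h3
        · refine ⟨y', hy', n + 1, ?_⟩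
          rw [← h1, add_comm n 1, repunit_add, repunit_one, pow_add]
          ring
      · exact Or.inr ⟨x, hSB x hx hxw, 0, by simp [repunit_zero]⟩
  refine ((covered_singleton D (-w / (D - 1))).union (hB.iterate_image w)).mono fun x hx => ?_
  rcases key _ x hx le_rfl with h | ⟨y, hy, n, h⟩
  · left
    exact Int.eq_ediv_of_mul_eq_right (by omega) (by linarith)
  · exact Or.inr ⟨y, hy, n, h⟩

theorem eq_empty_of_kernel_loops {d : ℤ} (hd : 0 < d) {S : Set ℤ} (hS : Commuting S)
    (hN : Negligible S) {Δ : ℕ} {w r : ℤ} (hw0 : 0 ≤ w) (hw1 : w < d ^ Δ)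
    (hw : pull (d ^ Δ) w S = S) (hr0 : 0 ≤ r) (hr1 : r < d ^ Δ) (hrw : r ≠ w)
    (h : S ∈ kernel d (pull (d ^ Δ) r S)) : S = ∅ := by
  obtain ⟨j, s, -, -, hs⟩ := exists_pull_eq_of_mem_kernel h
  have h1 : pull (d ^ (Δ + j) * d ^ Δ) (r + d ^ Δ * s + d ^ (Δ + j) * w) S = S := by
    rw [← pull_pull, hs, hw]
  have h2 : pull (d ^ (Δ + j) * d ^ Δ) (w + d ^ Δ * (r + d ^ Δ * s)) S = S := by
    rw [mul_comm, ← pull_pull, hw, hs]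
  refine eq_empty_of_two_loops hS hN (by positivity) (fun h => hrw ?_) h1 h2
  have h3 : (r + d ^ Δ * s + d ^ (Δ + j) * w) % d ^ Δ =
    (w + d ^ Δ * (r + d ^ Δ * s)) % d ^ Δ := by rw [h]
  rw [pow_add, mul_assoc, Int.add_mul_emod_self_left, Int.add_mul_emod_self_left,
    Int.add_mul_emod_self_left, Int.emod_eq_of_lt hr0 hr1, Int.emod_eq_of_lt hw0 hw1] at h3
  exact h3

theorem covered_aux {d : ℤ} (hd : 2 ≤ d) {Δ : ℕ} (hΔ : 1 ≤ Δ) (n : ℕ) :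
    ∀ S : Set ℤ, (kernel d S).Finite → (∀ T ∈ kernel d S, ∀ k, 1 ≤ k → HasLoop d k T →
      HasLoop d Δ T) → Commuting S → Negligible S → (kernel d S).ncard ≤ n →
    Covered (d ^ Δ) S := by
  have hd0 : 0 < d := by linarith
  have hD : 2 ≤ d ^ Δ := hd.trans (le_self_pow₀ (by linarith) (by omega))
  have cover : ∀ (S : Set ℤ) (E : ℤ), 0 < E → S ⊆ ⋃ r ∈ Finset.Ico 0 E,
      {y | ∃ x ∈ pull E r S, y = r + E * x} := by
    intro S E hE x hx
    simp only [Set.mem_iUnion]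
    exact ⟨x % E, Finset.mem_Ico.2 ⟨Int.emod_nonneg _ hE.ne', Int.emod_lt_of_pos _ hE⟩, x / E,
      mem_pull_emod hx, (Int.emod_add_mul_ediv _ _).symm⟩
  induction n with
  | zero =>
    intro S hfin _ _ _ h
    have := (Set.ncard_pos hfin).2 ⟨S, mem_kernel_self d S⟩
    omega
  | succ n ih =>
    intro S hfin hloop hS hN hn
    have step : ∀ k r, 0 ≤ r → r < d ^ k → S ∉ kernel d (pull (d ^ k) r S) →
        Covered (d ^ Δ) (pull (d ^ k) r S) := by
      intro k r h0 h1 hmem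
      have hsub : kernel d (pull (d ^ k) r S) ⊆ kernel d S :=
        kernel_subset hd0 ⟨k, r, h0, h1, rfl⟩
      refine ih _ (hfin.subset hsub) (fun T hT => hloop T (hsub hT)) (hS.pull _ _)
        (hN.pull (by positivity) _) ?_
      have := Set.ncard_lt_ncard (Set.ssubset_iff_of_subset hsub |>.2
        ⟨S, mem_kernel_self d S, hmem⟩) hfin
      omega
    by_cases hl : ∃ k, 1 ≤ k ∧ HasLoop d k S
    · obtain ⟨k, hk, hl⟩ := hl
      obtain ⟨w, hw0, hw1, hw⟩ := hloop S (mem_kernel_self d S) k hk hl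
      by_cases hne : S = ∅
      · rw [hne]; exact covered_empty _
      refine covered_of_loop hD (B := ⋃ r ∈ (Finset.Ico 0 (d ^ Δ)).erase w,
        {y | ∃ x ∈ pull (d ^ Δ) r S, y = r + d ^ Δ * x}) ?_ ?_ hw
      · refine Covered.biUnion _ fun r hr => Covered.image ?_ _ _
        rw [Finset.mem_erase, Finset.mem_Ico] at hr
        exact step _ _ hr.2.1 hr.2.2 fun h => hne
          (eq_empty_of_kernel_loops hd0 hS hN hw0 hw1 hw hr.2.1 hr.2.2 hr.1 h)
      · intro x hx hxw
        have := cover S (d ^ Δ) (by positivity) hx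
        simp only [Set.mem_iUnion] at this ⊢
        exact ⟨x % d ^ Δ, Finset.mem_erase.2 ⟨hxw, Finset.mem_Ico.2
          ⟨Int.emod_nonneg _ (by positivity), Int.emod_lt_of_pos _ (by positivity)⟩⟩, x / d ^ Δ,
          mem_pull_emod hx, (Int.emod_add_mul_ediv _ _).symm⟩
    · refine Covered.mono (Covered.biUnion _ fun r hr => Covered.image ?_ _ _) (cover S d hd0)
      rw [Finset.mem_Ico] at hr
      have := step 1 r hr.1 (by simpa using hr.2) fun h => hl ?_
      · simpa using this
      · obtain ⟨j, s, hs0, hs1, hs⟩ := exists_pull_eq_of_mem_kernel h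
        refine ⟨1 + j, by omega, _, ?_, ?_, hs⟩
        · have := hr.1; positivity
        · rw [pow_add, pow_one]; nlinarith [hr.2]

theorem exists_covered {d : ℤ} (hd : 2 ≤ d) {S : Set ℤ} (hS : Commuting S) (hN : Negligible S)
    (hF : FiniteKernel d S) : ∃ δ : ℕ, 1 ≤ δ ∧ Covered (d ^ δ) S := by
  have hfin := hF.kernel_finite
  obtain ⟨Δ, hΔ, h⟩ := exists_common_loop (by linarith : 0 < d) hfin
  exact ⟨Δ, hΔ, covered_aux hd hΔ _ S hfin h hS hN le_rfl⟩

/-! ### Dependence on well-separated exponents -/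

/-- The exponents `m i`, `i ∈ l`, increase along `l` with all gaps at least `M`, starting
from `b`. -/
def Gapped (M : ℕ) : ℕ → List ℕ → (ℕ → ℕ) → Prop
  | _, [], _ => True
  | b, i :: l, m => b + M ≤ m i ∧ Gapped M (m i) l m

theorem Gapped.mono {M M' : ℕ} (h : M' ≤ M) {l : List ℕ} {m : ℕ → ℕ} :
    ∀ {b : ℕ}, Gapped M b l m → Gapped M' b l m := by
  induction l with
  | nil => exact fun _ => trivial
  | cons i l ih => exact fun hl => ⟨by have := hl.1; omega, ih hl.2⟩

theorem Gapped.le {M : ℕ} {l : List ℕ} {m : ℕ → ℕ} :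
    ∀ {b : ℕ}, Gapped M b l m → ∀ i ∈ l, b ≤ m i := by
  induction l with
  | nil => simp
  | cons i l ih =>
    intro b hl j hj
    have h1 := hl.1
    rcases List.mem_cons.1 hj with rfl | hj
    · omega
    · have := ih hl.2 j hj
      omega

theorem Gapped.sub {M g : ℕ} {l : List ℕ} {m : ℕ → ℕ} :
    ∀ {b : ℕ}, Gapped M (b + g) l m → Gapped M b l (fun i => m i - g) := by
  induction l with
  | nil => exact fun _ => trivial
  | cons i l ih =>
    intro b hl
    have h1 := hl.1
    refine ⟨by change b + M ≤ m i - g; omega, ih ?_⟩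
    change Gapped M (m i - g + g) l m
    rw [Nat.sub_add_cancel (by omega)]
    exact hl.2

/-- The sum `∑ aᵢ (1 + D + ⋯ + D ^ (mᵢ - 1))` over the indices in a list. -/
def value (D : ℤ) (a : ℕ → ℤ) (l : List ℕ) (m : ℕ → ℕ) : ℤ :=
  (l.map fun i => a i * repunit D (m i)).sum

theorem value_eq_add (D : ℤ) (a : ℕ → ℤ) {l : List ℕ} {m : ℕ → ℕ} {g : ℕ}
    (h : ∀ i ∈ l, g ≤ m i) :
    value D a l m = (l.map a).sum * repunit D g + D ^ g * value D a l (fun i => m i - g) := by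
  induction l with
  | nil => simp [value]
  | cons i l ih =>
    have h1 := ih fun j hj => h j (List.mem_cons_of_mem _ hj)
    have h2 : repunit D (m i) = repunit D g + D ^ g * repunit D (m i - g) := by
      rw [← repunit_add, Nat.add_sub_cancel' (h i List.mem_cons_self)]
    simp only [value, List.map_cons, List.sum_cons] at h1 ⊢
    rw [h1, h2]
    ring

/-- Membership in `S` of sums with well-separated exponents only depends on the exponents
modulo `N`. -/
def ResidueDetermined (D : ℤ) (a : ℕ → ℤ) (S : Set ℤ) (l : List ℕ) (N M : ℕ) : Prop :=
  ∀ m m', Gapped M 0 l m → Gapped M 0 l m' → (∀ i ∈ l, m i ≡ m' i [MOD N]) →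
    (value D a l m ∈ S ↔ value D a l m' ∈ S)

theorem ResidueDetermined.mono {D : ℤ} {a : ℕ → ℤ} {S : Set ℤ} {l : List ℕ} {N M N' M' : ℕ}
    (h : ResidueDetermined D a S l N M) (hN : N ∣ N') (hM : M ≤ M') :
    ResidueDetermined D a S l N' M' := fun m m' hm hm' hmm =>
  h m m' (hm.mono hM) (hm'.mono hM) fun i hi => (hmm i hi).of_dvd hN

theorem exists_common_bounds {ι : Type*} (s : Finset ι) {P : ι → ℕ → ℕ → Prop}
    (mono : ∀ i N M N' M', P i N M → N ∣ N' → M ≤ M' → P i N' M')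
    (h : ∀ i ∈ s, ∃ N M, 1 ≤ N ∧ P i N M) : ∃ N M, 1 ≤ N ∧ ∀ i ∈ s, P i N M := by
  classical
  induction s using Finset.induction_on with
  | empty => exact ⟨1, 0, le_rfl, by simp⟩
  | insert i s _ ih =>
    obtain ⟨N, M, hN, h1⟩ := ih fun j hj => h j (Finset.mem_insert_of_mem hj)
    obtain ⟨N', M', hN', h2⟩ := h i (Finset.mem_insert_self i s)
    refine ⟨N * N', M + M', Nat.mul_pos hN hN', fun j hj => ?_⟩
    rcases Finset.mem_insert.1 hj with rfl | hj
    · exact mono _ _ _ _ _ h2 (Dvd.intro_left _ rfl) (Nat.le_add_left _ _)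
    · exact mono _ _ _ _ _ (h1 j hj) (Dvd.intro _ rfl) (Nat.le_add_right _ _)

theorem exists_period_of_finite_range {X : Type*} {f : ℕ → X} {F : X → X}
    (hF : ∀ g, f (g + 1) = F (f g)) (hf : (Set.range f).Finite) :
    ∃ N M, 1 ≤ N ∧ ∀ g g', M ≤ g → M ≤ g' → g ≡ g' [MOD N] → f g = f g' := by
  have hninj : ¬ Function.Injective f := fun h => Set.infinite_range_of_injective h hf
  obtain ⟨x, y, hxy, hne⟩ : ∃ x y, f x = f y ∧ x < y := by
    simp only [Function.Injective, not_forall] at hninj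
    obtain ⟨x, y, h, hne⟩ := hninj
    rcases lt_or_gt_of_ne hne with h1 | h1
    exacts [⟨x, y, h, h1⟩, ⟨y, x, h.symm, h1⟩]
  have h1 : ∀ k, f (x + k) = f (y + k) := by
    intro k
    induction k with
    | zero => exact hxy
    | succ k ih => rw [← add_assoc, ← add_assoc, hF, hF, ih]
  have h2 : ∀ g, x ≤ g → ∀ k, f (g + (y - x) * k) = f g := by
    intro g hg k
    induction k with
    | zero => simp
    | succ k ih =>
      rw [← ih, show g + (y - x) * (k + 1) = y + (g - x + (y - x) * k) by
        rw [Nat.mul_succ]; omega, ← h1]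
      congr 1
      omega
  have h3 : ∀ g g', x ≤ g → g ≤ g' → g ≡ g' [MOD (y - x)] → f g = f g' := by
    intro g g' hg hgg' h
    obtain ⟨k, hk⟩ := (Nat.modEq_iff_dvd' hgg').1 h
    rw [← h2 g hg k, ← hk, Nat.add_sub_cancel' hgg']
  refine ⟨y - x, x, by omega, fun g g' hg hg' h => ?_⟩
  rcases le_total g g' with hle | hle
  · exact h3 g g' hg hle h
  · exact (h3 g' g hg' hle h.symm).symm

theorem exists_residueDetermined {d : ℤ} (hd : 2 ≤ d) {δ : ℕ} (hδ : 1 ≤ δ) (a : ℕ → ℤ)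
    (l : List ℕ) : ∀ S : Set ℤ, FiniteKernel d S →
      ∃ N M, 1 ≤ N ∧ ResidueDetermined (d ^ δ) a S l N M := by
  have hD : 2 ≤ d ^ δ := hd.trans (le_self_pow₀ (by linarith) (by omega))
  induction l with
  | nil => exact fun S _ => ⟨1, 0, le_rfl, fun _ _ _ _ _ => Iff.rfl⟩
  | cons i l ih =>
    intro S hS
    let e := ((i :: l).map a).sum
    let f : ℕ → Set ℤ := fun g => pull ((d ^ δ) ^ g) (e * repunit (d ^ δ) g) S
    have hf : (Set.range f).Finite := by
      refine (hS e.natAbs).subset ?_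
      rintro _ ⟨g, rfl⟩
      refine ⟨δ * g, e * repunit (d ^ δ) g, ?_, by rw [pow_mul]⟩
      rw [abs_mul, Int.natCast_natAbs, abs_of_nonneg (repunit_nonneg (by linarith) g), pow_mul]
      exact mul_le_mul_of_nonneg_left (repunit_le hD g) (abs_nonneg _)
    obtain ⟨N₁, M₁, hN₁, h₁⟩ := exists_period_of_finite_range (f := f) (F := pull (d ^ δ) e)
      (fun g => by
        simp only [f]
        rw [pull_pull, repunit_add, repunit_one, pow_succ]
        ring_nf) hf
    obtain ⟨N₂, M₂, hN₂, h₂⟩ := exists_common_bounds hf.toFinset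
      (P := fun T N M => ResidueDetermined (d ^ δ) a T l N M)
      (fun _ _ _ _ _ h hN hM => h.mono hN hM) fun T hT => by
        obtain ⟨g, rfl⟩ : T ∈ Set.range f := by simpa using hT
        refine ih _ ?_
        simp only [f, ← pow_mul]
        exact hS.pull (by linarith) _ _
    refine ⟨N₁ * N₂, M₁ + M₂, Nat.mul_pos hN₁ hN₂, fun m m' hm hm' hmm => ?_⟩
    have key : ∀ m, Gapped (M₁ + M₂) 0 (i :: l) m → (value (d ^ δ) a (i :: l) m ∈ S ↔
        value (d ^ δ) a l (fun j => m j - m i) ∈ f (m i)) := by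
      intro m hm
      have hle : ∀ j ∈ i :: l, m i ≤ m j := by
        intro j hj
        rcases List.mem_cons.1 hj with rfl | hj
        exacts [le_rfl, hm.2.le j hj]
      rw [value_eq_add _ _ hle, mem_pull]
      simp [value, repunit_zero, e]
    have hi := hmm i List.mem_cons_self
    have hf' : f (m i) = f (m' i) := h₁ _ _ (by have := hm.1; omega) (by have := hm'.1; omega)
      (hi.of_dvd (Dvd.intro _ rfl))
    rw [key m hm, key m' hm', ← hf']
    refine h₂ _ (by simp) _ _ (Gapped.sub ?_) (Gapped.sub ?_) fun j hj => ?_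
    · rw [zero_add]; exact hm.2.mono (by omega)
    · rw [zero_add]; exact hm'.2.mono (by omega)
    · have hj' := (hmm j (List.mem_cons_of_mem _ hj)).of_dvd (Dvd.intro_left N₁ rfl)
      have hi' := hi.of_dvd (Dvd.intro_left N₁ rfl)
      refine Nat.ModEq.add_right_cancel hi' ?_
      rwa [Nat.sub_add_cancel (hm.2.le j hj), Nat.sub_add_cancel (hm'.2.le j hj)]

/-! ### Ultrafilters concentrated on patterns -/

theorem Gapped.congr {M : ℕ} {l : List ℕ} {m m' : ℕ → ℕ} :
    ∀ {b : ℕ}, (∀ i ∈ l, m i = m' i) → Gapped M b l m → Gapped M b l m' := by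
  induction l with
  | nil => exact fun _ _ => trivial
  | cons i l ih =>
    intro b h hl
    refine ⟨h i List.mem_cons_self ▸ hl.1, ih (fun j hj => h j (List.mem_cons_of_mem _ hj)) ?_⟩
    rw [← h i List.mem_cons_self]
    exact hl.2

theorem gapped_of_pairwise {M : ℕ} {l : List ℕ} {m : ℕ → ℕ} :
    ∀ {b : ℕ}, (∀ i ∈ l, b + M ≤ m i) → l.Pairwise (fun i j => m i + M ≤ m j) →
      Gapped M b l m := by
  induction l with
  | nil => exact fun _ _ => trivial
  | cons i l ih =>
    intro b h hl
    rw [List.pairwise_cons] at hl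
    exact ⟨h i List.mem_cons_self, ih hl.1 hl.2⟩

theorem exists_perm_gapped {I : Finset ℕ} {M : ℕ} {m : ℕ → ℕ} (h0 : ∀ i ∈ I, M ≤ m i)
    (h : ∀ i ∈ I, ∀ j ∈ I, i ≠ j → m i + M ≤ m j ∨ m j + M ≤ m i) :
    ∃ l : List ℕ, l.Perm I.toList ∧ Gapped M 0 l m := by
  have hperm := List.perm_insertionSort (fun i j => m i ≤ m j) I.toList
  have hmem : ∀ i ∈ List.insertionSort (fun i j => m i ≤ m j) I.toList, i ∈ I := fun i hi =>
    Finset.mem_toList.1 (hperm.mem_iff.1 hi)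
  have htot : Std.Total (fun i j : ℕ => m i ≤ m j) := ⟨fun i j => le_total _ _⟩
  have htrans : IsTrans ℕ (fun i j : ℕ => m i ≤ m j) := ⟨fun i j k => le_trans⟩
  refine ⟨_, hperm, gapped_of_pairwise (fun i hi => by simpa using h0 i (hmem i hi)) ?_⟩
  have h1 := List.pairwise_insertionSort (fun i j => m i ≤ m j) I.toList
  have h2 : List.Pairwise (· ≠ ·) (List.insertionSort (fun i j => m i ≤ m j) I.toList) :=
    hperm.nodup_iff.2 I.nodup_toList
  refine (h1.and h2).imp_of_mem fun {i j} hi hj hij => ?_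
  rcases h i (hmem i hi) j (hmem j hj) hij.2 with h3 | h3
  · exact h3
  · have := hij.1
    omega

/-- Iterated limits of `S` along a list of ultrafilters. -/
def iterAct (P : ℕ → Ultrafilter ℤ) (l : List ℕ) (S : Set ℤ) : Set ℤ :=
  l.foldr (fun i T => act (P i) T) S

theorem Commuting.iterAct {S : Set ℤ} (hS : Commuting S) (P : ℕ → Ultrafilter ℤ)
    (l : List ℕ) : Commuting (iterAct P l S) := by
  induction l with
  | nil => exact hS
  | cons i l ih => exact ih.act (P i)

theorem Commuting.iterAct_perm {S : Set ℤ} (hS : Commuting S) (P : ℕ → Ultrafilter ℤ)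
    {l l' : List ℕ} (h : l.Perm l') :
    StableAutomatic.iterAct P l S = StableAutomatic.iterAct P l' S := by
  induction h with
  | nil => rfl
  | cons i _ ih => exact congrArg (StableAutomatic.act (P i)) ih
  | swap i j l => exact hS.iterAct P l (P j) (P i)
  | trans _ _ ih₁ ih₂ => exact ih₁.trans ih₂

/-- The limit of `t (1 + D + ⋯ + D ^ (c + N n - 1))` along a nonprincipal ultrafilter on `n`. -/
noncomputable def repunitLimit (D t : ℤ) (c N : ℕ) : Ultrafilter ℤ :=
  (hyperfilter ℕ).map fun n => t * repunit D (c + N * n)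

theorem mem_iterAct_iff {D : ℤ} {a : ℕ → ℤ} {c : ℕ → ℕ} {N M : ℕ} (hN : 1 ≤ N) {A : Set ℤ}
    {v : Prop} {l : List ℕ} (hl : l.Nodup) : ∀ {β : ℤ} {b : ℕ},
    (∀ m, Gapped M b l m → (∀ i ∈ l, m i ≡ c i [MOD N]) → (β + value D a l m ∈ A ↔ v)) →
    (β ∈ iterAct (fun i => repunitLimit D (a i) (c i) N) l A ↔ v) := by
  induction l with
  | nil =>
    intro β b h
    simpa [value, iterAct] using h 0 trivial (by simp)
  | cons i l ih =>
    intro β b h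
    rw [List.nodup_cons] at hl
    change (∀ᶠ n in (hyperfilter ℕ : Filter ℕ), β + a i * repunit D (c i + N * n) ∈
      iterAct (fun i => repunitLimit D (a i) (c i) N) l A) ↔ v
    refine Iff.trans (eventually_congr ?_) (eventually_const_iff (p := hyperfilter ℕ))
    have hev : ∀ᶠ n in (hyperfilter ℕ : Filter ℕ), b + M ≤ n :=
      Nat.hyperfilter_le_atTop (eventually_ge_atTop (b + M))
    filter_upwards [hev] with n hn
    refine ih hl.2 (b := c i + N * n) fun m hm hmc => ?_
    have hne : ∀ j ∈ l, m j = Function.update m i (c i + N * n) j := fun j hj => by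
      rw [Function.update_of_ne]
      rintro rfl
      exact hl.1 hj
    rw [← h (Function.update m i (c i + N * n)) ⟨?_, ?_⟩ ?_]
    · simp only [value, List.map_cons, List.sum_cons, Function.update_self]
      rw [List.map_congr_left fun j hj => by rw [hne j hj], add_assoc]
    · rw [Function.update_self]
      nlinarith
    · rw [Function.update_self]
      exact hm.congr hne
    · intro j hj
      rcases List.mem_cons.1 hj with rfl | hj
      · rw [Function.update_self]
        simp [Nat.ModEq]
      · rw [← hne j hj]
        exact hmc j hj

/-- The pattern `pattern (d ^ δ) β I a` belongs to `p` and has the least possible number of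
summands among all such patterns. -/
def MinPattern (d : ℤ) (p : Ultrafilter ℤ) (δ : ℕ) (β : ℤ) (I : Finset ℕ) (a : ℕ → ℤ) : Prop :=
  pattern (d ^ δ) β I a ∈ p ∧
    ∀ β' I' a', ∀ δ' : ℕ, 1 ≤ δ' → pattern (d ^ δ') β' I' a' ∈ p → I.card ≤ I'.card

theorem exists_minPattern {d : ℤ} {p : Ultrafilter ℤ} {δ : ℕ} (hδ : 1 ≤ δ) {β : ℤ}
    {I : Finset ℕ} {a : ℕ → ℤ} (h : pattern (d ^ δ) β I a ∈ p) :
    ∃ δ' β' I' a', 1 ≤ δ' ∧ MinPattern d p δ' β' I' a' ∧ I'.card ≤ I.card := by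
  classical
  have hex : ∃ n, ∃ δ' : ℕ, ∃ β' I' a', 1 ≤ δ' ∧ pattern (d ^ δ') β' I' a' ∈ p ∧ I'.card = n :=
    ⟨_, δ, β, I, a, hδ, h, rfl⟩
  obtain ⟨δ', β', I', a', h1, h2, h3⟩ := Nat.find_spec hex
  refine ⟨δ', β', I', a', h1, ⟨h2, fun β'' I'' a'' δ'' h4 h5 => ?_⟩, ?_⟩
  · rw [h3]
    exact Nat.find_min' hex ⟨δ'', β'', I'', a'', h4, h5, rfl⟩
  · rw [h3]
    exact Nat.find_min' hex ⟨δ, β, I, a, hδ, h, rfl⟩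

theorem MinPattern.eventually_separated {d : ℤ} {p : Ultrafilter ℤ} {δ : ℕ} (hδ : 1 ≤ δ) {β : ℤ}
    {I : Finset ℕ} {a : ℕ → ℤ} (h : MinPattern d p δ β I a) {m : ℤ → ℕ → ℕ}
    (hm : ∀ᶠ x in (p : Filter ℤ), x = β + ∑ i ∈ I, a i * repunit (d ^ δ) (m x i)) (M : ℕ) :
    ∀ᶠ x in (p : Filter ℤ), (∀ i ∈ I, M ≤ m x i) ∧
      ∀ i ∈ I, ∀ j ∈ I, i ≠ j → m x i + M ≤ m x j ∨ m x j + M ≤ m x i := by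
  have h1 : ∀ i ∈ I, ∀ c ∈ Finset.range M, ∀ᶠ x in (p : Filter ℤ), m x i ≠ c := by
    intro i hi c _
    rw [Ultrafilter.eventually_not]
    intro hc
    have := h.2 (β + a i * repunit (d ^ δ) c) (I.erase i) a δ hδ (by
      filter_upwards [hm, hc] with x hx hxc
      refine ⟨m x, hx.trans ?_⟩
      rw [← Finset.add_sum_erase _ _ hi, hxc, add_assoc])
    exact absurd (Finset.card_erase_lt_of_mem hi) this.not_gt
  have h2 : ∀ i ∈ I, ∀ j ∈ I, i ≠ j → ∀ c ∈ Finset.range M,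
      ∀ᶠ x in (p : Filter ℤ), m x j ≠ m x i + c := by
    intro i hi j hj hij c _
    rw [Ultrafilter.eventually_not]
    intro hc
    have hi' : i ∈ I.erase j := Finset.mem_erase.2 ⟨hij, hi⟩
    have := h.2 (β + a j * repunit (d ^ δ) c) (I.erase j)
      (Function.update a i (a i + a j * (d ^ δ) ^ c)) δ hδ (by
        filter_upwards [hm, hc] with x hx hxc
        refine ⟨m x, hx.trans ?_⟩
        rw [← Finset.add_sum_erase _ _ hj, ← Finset.add_sum_erase _ _ hi',
          ← Finset.add_sum_erase _ _ hi', hxc, Function.update_self, add_comm (m x i) c,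
          repunit_add, Finset.sum_congr rfl fun k hk => by
            rw [← Function.update_of_ne (Finset.ne_of_mem_erase hk) (a i + a j * (d ^ δ) ^ c) a]]
        ring)
    exact absurd (Finset.card_erase_lt_of_mem hj) this.not_gt
  have h3 : ∀ᶠ x in (p : Filter ℤ), ∀ i ∈ I, ∀ c ∈ Finset.range M, m x i ≠ c := by
    simpa only [eventually_all_finset] using h1
  have h4 : ∀ᶠ x in (p : Filter ℤ), ∀ i ∈ I, ∀ j ∈ I, i ≠ j → ∀ c ∈ Finset.range M,
      m x j ≠ m x i + c := by
    simpa only [eventually_all_finset, eventually_imp_distrib_left] using h2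
  filter_upwards [h3, h4] with x hx3 hx4
  constructor
  · intro i hi
    by_contra hlt
    exact hx3 i hi (m x i) (Finset.mem_range.2 (by omega)) rfl
  · intro i hi j hj hij
    by_contra! hlt
    rcases le_total (m x i) (m x j) with hle | hle
    · exact hx4 i hi j hj hij (m x j - m x i) (Finset.mem_range.2 (by omega)) (by omega)
    · exact hx4 j hj i hi hij.symm (m x i - m x j) (Finset.mem_range.2 (by omega)) (by omega)

/-- The part of a pattern whose exponents are `cᵢ + N (nᵢ + 1)` with `nᵢ ∈ ℕ`. -/
def subpattern (D β : ℤ) (I : Finset ℕ) (a : ℕ → ℤ) (c : ℕ → ℕ) (N : ℕ) : Set ℤ :=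
  {x | ∃ n : ℕ → ℕ, x = β + ∑ i ∈ I, a i * repunit D (c i + N * (n i + 1))}

theorem subpattern_subset (D β : ℤ) (I : Finset ℕ) (a : ℕ → ℤ) (c : ℕ → ℕ) (N : ℕ) :
    subpattern D β I a c N ⊆ pattern D β I a := by
  rintro x ⟨n, rfl⟩
  exact ⟨fun i => c i + N * (n i + 1), rfl⟩

theorem exists_eventually_modEq {α : Type*} (p : Ultrafilter α) {N : ℕ} (hN : 1 ≤ N)
    (m : α → ℕ) : ∃ c < N, ∀ᶠ x in (p : Filter α), m x % N = c := by
  have : ∀ᶠ x in (p : Filter α), ∃ c ∈ Finset.range N, m x % N = c :=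
    Eventually.of_forall fun x => ⟨_, Finset.mem_range.2 (Nat.mod_lt _ hN), rfl⟩
  have h2 : (⋃ c ∈ Finset.range N, {x | m x % N = c}) ∈ p := by
    filter_upwards [this] with x hx
    simpa using hx
  obtain ⟨c, hc, h⟩ := (Ultrafilter.finite_biUnion_mem_iff (Finset.finite_toSet _)).1 h2
  exact ⟨c, by simpa using hc, h⟩

theorem MinPattern.exists_subpattern_mem {d : ℤ} {p : Ultrafilter ℤ} {δ : ℕ} (hδ : 1 ≤ δ) {β : ℤ}
    {I : Finset ℕ} {a : ℕ → ℤ} (h : MinPattern d p δ β I a) {N : ℕ} (hN : 1 ≤ N) :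
    ∃ c, subpattern (d ^ δ) β I a c N ∈ p := by
  have hex : ∀ x : ℤ, ∃ m : ℕ → ℕ, x ∈ pattern (d ^ δ) β I a →
      x = β + ∑ i ∈ I, a i * repunit (d ^ δ) (m i) := by
    intro x
    by_cases hx : x ∈ pattern (d ^ δ) β I a
    · obtain ⟨m, hm⟩ := hx
      exact ⟨m, fun _ => hm⟩
    · exact ⟨0, fun h => absurd h hx⟩
  choose m hm using hex
  have hm' : ∀ᶠ x in (p : Filter ℤ), x = β + ∑ i ∈ I, a i * repunit (d ^ δ) (m x i) :=
    mem_of_superset h.1 hm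
  choose c hcN hc using fun i => exists_eventually_modEq p hN (fun x => m x i)
  have hc' : ∀ᶠ x in (p : Filter ℤ), ∀ i ∈ I, m x i % N = c i := by
    rw [eventually_all_finset]
    exact fun i _ => hc i
  refine ⟨c, ?_⟩
  filter_upwards [hm', hc', h.eventually_separated hδ hm' (2 * N)] with x hx hxc hxs
  refine ⟨fun i => m x i / N - 1, hx.trans ?_⟩
  refine congrArg _ (Finset.sum_congr rfl fun i hi => ?_)
  have h1 : 1 ≤ m x i / N := (Nat.le_div_iff_mul_le hN).2 (by have := hxs.1 i hi; omega)
  rw [Nat.sub_add_cancel h1, ← hxc i hi, Nat.mod_add_div]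

theorem MinPattern.mem_iff {d : ℤ} {p : Ultrafilter ℤ} {δ : ℕ} (hδ : 1 ≤ δ) {β : ℤ}
    {I : Finset ℕ} {a : ℕ → ℤ} (h : MinPattern d p δ β I a) {N M : ℕ} (hN : 1 ≤ N)
    {c : ℕ → ℕ} (hc : subpattern (d ^ δ) β I a c N ∈ p) {A : Set ℤ} (hA : Commuting A)
    (hdet : ∀ l : List ℕ, l.Perm I.toList →
      ResidueDetermined (d ^ δ) a (pull 1 β A) l N M) :
    A ∈ p ↔ β ∈ iterAct (fun i => repunitLimit (d ^ δ) (a i) (c i) N) I.toList A := by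
  have hex : ∀ x : ℤ, ∃ n : ℕ → ℕ, x ∈ subpattern (d ^ δ) β I a c N →
      x = β + ∑ i ∈ I, a i * repunit (d ^ δ) (c i + N * (n i + 1)) := by
    intro x
    by_cases hx : x ∈ subpattern (d ^ δ) β I a c N
    · obtain ⟨m, hm⟩ := hx
      exact ⟨m, fun _ => hm⟩
    · exact ⟨0, fun h => absurd h hx⟩
  choose n hn using hex
  have hm : ∀ᶠ x in (p : Filter ℤ), x = β + ∑ i ∈ I, a i * repunit (d ^ δ)
      ((fun x i => c i + N * (n x i + 1)) x i) := mem_of_superset hc hn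
  refine Iff.trans (eventually_congr ?_) (eventually_const_iff (p := p))
  filter_upwards [hm, h.eventually_separated hδ hm M] with x hx hsep
  obtain ⟨l, hl, hgap⟩ := exists_perm_gapped hsep.1 hsep.2
  rw [← hA.iterAct_perm _ hl]
  refine (mem_iterAct_iff hN (hl.nodup_iff.2 I.nodup_toList) (b := 0) (M := M) ?_).symm
  intro m' hm' hmod
  have h1 := hdet l hl m' (fun i => c i + N * (n x i + 1)) hm' hgap fun i hi =>
    (hmod i hi).trans (by simp [Nat.ModEq])
  rw [mem_pull, mem_pull, one_mul, one_mul] at h1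
  rw [h1]
  refine iff_of_eq (congrArg (· ∈ A) ?_)
  rw [value, (hl.map _).sum_eq, Finset.sum_map_toList]
  exact hx.symm

/-! ### Generators of the Boolean algebra -/

/-- Cosets of subgroups of the integers. -/
def cosets : Set (Set ℤ) :=
  {S | ∃ (H : AddSubgroup ℤ) (c : ℤ), S = {x | ∃ h ∈ H, x = c + h}}

/-- Translates of sums of finitely many sets `Cset d a δ` with `δ ≥ 1`. -/
def repunitSums (d : ℤ) : Set (Set ℤ) :=
  {S : Set ℤ | ∃ (k : ℕ) (β : ℤ) (a : Fin k → ℤ) (δ : Fin k → ℕ),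
    (∀ i, 1 ≤ δ i) ∧
    S = {x | ∃ c : Fin k → ℤ, (∀ i, c i ∈ Cset d (a i) (δ i)) ∧ x = β + ∑ i : Fin k, c i}}

theorem mem_Cset_iff {d a x : ℤ} {δ : ℕ} :
    x ∈ Cset d a δ ↔ ∃ n : ℕ, x = a * repunit (d ^ δ) (n + 1) := by
  refine exists_congr fun n => ?_
  rw [repunit, Finset.mul_sum]
  simp only [← pow_mul, mul_comm a, mul_comm δ]

theorem subpattern_mem_repunitSums (d : ℤ) {δ N : ℕ} (hδ : 1 ≤ δ) (hN : 1 ≤ N) (β : ℤ)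
    (I : Finset ℕ) (a : ℕ → ℤ) (c : ℕ → ℕ) : subpattern (d ^ δ) β I a c N ∈ repunitSums d := by
  have hterm : ∀ i n, a i * repunit (d ^ δ) (c i + N * (n + 1)) = a i * repunit (d ^ δ) (c i) +
      a i * (d ^ δ) ^ c i * repunit (d ^ δ) N * repunit (d ^ (δ * N)) (n + 1) := by
    intro i n
    rw [repunit_add, repunit_mul, pow_mul d δ N]
    ring
  have hsum : ∀ f : ℕ → ℤ, ∑ i ∈ I, f i = ∑ k : Fin I.card, f (I.equivFin.symm k) := by
    intro f
    rw [← Finset.sum_coe_sort, ← Equiv.sum_comp I.equivFin.symm]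
  refine ⟨I.card, β + ∑ i ∈ I, a i * repunit (d ^ δ) (c i), fun k =>
    let i : ℕ := I.equivFin.symm k
    a i * (d ^ δ) ^ c i * repunit (d ^ δ) N, fun _ => δ * N, fun _ => Nat.mul_pos hδ hN, ?_⟩
  ext x
  simp only [mem_Cset_iff]
  constructor
  · rintro ⟨n, rfl⟩
    refine ⟨_, fun k => ⟨n (I.equivFin.symm k), rfl⟩, ?_⟩
    simp only [hterm, Finset.sum_add_distrib]
    rw [← add_assoc, hsum fun i =>
      a i * (d ^ δ) ^ c i * repunit (d ^ δ) N * repunit (d ^ (δ * N)) (n i + 1)]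
  · rintro ⟨y, hy, rfl⟩
    choose n hn using hy
    refine ⟨fun i => if h : i ∈ I then n (I.equivFin ⟨i, h⟩) else 0, ?_⟩
    simp only [hterm, Finset.sum_add_distrib]
    rw [← add_assoc, hsum fun i => a i * (d ^ δ) ^ c i * repunit (d ^ δ) N *
      repunit (d ^ (δ * N)) ((if h : i ∈ I then n (I.equivFin ⟨i, h⟩) else 0) + 1)]
    refine congrArg _ (Finset.sum_congr rfl fun k _ => ?_)
    rw [hn k, dif_pos (I.equivFin.symm k).2]
    simp

theorem MinPattern.transfer {d : ℤ} {p q : Ultrafilter ℤ}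
    (hpq : ∀ s ∈ repunitSums d, s ∈ p ↔ s ∈ q) {δ : ℕ} (hδ : 1 ≤ δ) {β : ℤ} {I : Finset ℕ}
    {a : ℕ → ℤ} (h : MinPattern d p δ β I a) : MinPattern d q δ β I a := by
  have key : ∀ {p q : Ultrafilter ℤ}, (∀ s ∈ repunitSums d, s ∈ p ↔ s ∈ q) → ∀ {δ : ℕ},
      1 ≤ δ → ∀ {β : ℤ} {I : Finset ℕ} {a : ℕ → ℤ}, MinPattern d p δ β I a →
      pattern (d ^ δ) β I a ∈ q := by
    intro p q hpq δ hδ β I a h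
    obtain ⟨c, hc⟩ := h.exists_subpattern_mem hδ (N := 1) le_rfl
    exact mem_of_superset ((hpq _ (subpattern_mem_repunitSums d hδ le_rfl β I a c)).1 hc)
      (subpattern_subset _ _ _ _ _ _)
  refine ⟨key hpq hδ h, fun β' I' a' δ' hδ' h' => ?_⟩
  obtain ⟨δ'', β'', I'', a'', h1, h2, h3⟩ := exists_minPattern hδ' h'
  exact (h.2 _ _ _ _ h1 (key (fun s hs => (hpq s hs).symm) h1 h2)).trans h3

theorem mem_iff_mem_of_minPattern {d : ℤ} (hd : 2 ≤ d) {A : Set ℤ} (hA : Commuting A)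
    (hF : FiniteKernel d A) {p q : Ultrafilter ℤ} (hpq : ∀ s ∈ repunitSums d, s ∈ p ↔ s ∈ q)
    {δ : ℕ} (hδ : 1 ≤ δ) {β : ℤ} {I : Finset ℕ} {a : ℕ → ℤ} (h : MinPattern d p δ β I a) :
    A ∈ p ↔ A ∈ q := by
  obtain ⟨N, M, hN, hdet⟩ := exists_common_bounds I.toList.permutations.toFinset
    (P := fun l N M => ResidueDetermined (d ^ δ) a (pull 1 β A) l N M)
    (fun _ _ _ _ _ h hN hM => h.mono hN hM) fun l _ =>
      exists_residueDetermined hd hδ a l _ (by simpa using hF.pull (by linarith) 0 β)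
  have hdet' : ∀ l : List ℕ, l.Perm I.toList →
      ResidueDetermined (d ^ δ) a (pull 1 β A) l N M := fun l hl =>
    hdet l (by simpa [List.mem_permutations] using hl)
  obtain ⟨c, hc⟩ := h.exists_subpattern_mem hδ hN
  have hc' := (hpq _ (subpattern_mem_repunitSums d hδ hN β I a c)).1 hc
  rw [h.mem_iff hδ hN hc hA hdet', (h.transfer hpq hδ).mem_iff hδ hN hc' hA hdet']

theorem Periodic.mem_iff_mem {T : ℤ} (hT : 0 < T) {S : Set ℤ} (hS : Periodic T S)
    {p q : Ultrafilter ℤ} (hpq : ∀ s ∈ cosets, s ∈ p ↔ s ∈ q) : S ∈ p ↔ S ∈ q := by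
  obtain ⟨c, hc⟩ := exists_residue hT p
  have hset : {x : ℤ | T ∣ x - c} ∈ cosets := by
    refine ⟨AddSubgroup.zmultiples T, c, ?_⟩
    ext x
    simp only [Set.mem_ofPred_eq, Int.mem_zmultiples_iff]
    constructor
    · exact fun h => ⟨x - c, h, by ring⟩
    · rintro ⟨h, hh, rfl⟩
      simpa using hh
  have hc' : ∀ᶠ x in (q : Filter ℤ), T ∣ x - c := (hpq _ hset).1 hc
  have key : ∀ p : Ultrafilter ℤ, (∀ᶠ x in (p : Filter ℤ), T ∣ x - c) → (S ∈ p ↔ c ∈ S) :=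
    fun p hp => (eventually_congr (hp.mono fun x hx => hS.iff_of_dvd hx)).trans
      (eventually_const_iff (p := p))
  rw [key p hc, key q hc']

theorem Covered.exists_pattern_mem {D : ℤ} {S : Set ℤ} (hS : Covered D S) {p : Ultrafilter ℤ}
    (h : S ∈ p) : ∃ β I a, pattern D β I a ∈ p := by
  obtain ⟨F, hF, hE, hc⟩ := hS
  obtain ⟨E, hEF, hEp⟩ := (Ultrafilter.finite_sUnion_mem_iff hF).1 (mem_of_superset h hc)
  obtain ⟨β, I, a, rfl⟩ := hE E hEF
  exact ⟨β, I, a, hEp⟩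

theorem mem_iff_mem_of_agree {d : ℤ} (hd : 2 ≤ d) {A : Set ℤ} (hA : Commuting A)
    (hF : FiniteKernel d A) {p q : Ultrafilter ℤ} (hc : ∀ s ∈ cosets, s ∈ p ↔ s ∈ q)
    (hr : ∀ s ∈ repunitSums d, s ∈ p ↔ s ∈ q) : A ∈ p ↔ A ∈ q := by
  by_cases hp : ∃ δ β I a, 1 ≤ δ ∧ MinPattern d p δ β I a
  · obtain ⟨δ, β, I, a, hδ, h⟩ := hp
    exact mem_iff_mem_of_minPattern hd hA hF hr hδ h
  have hq : ¬ ∃ δ β I a, 1 ≤ δ ∧ MinPattern d q δ β I a := by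
    rintro ⟨δ, β, I, a, hδ, h⟩
    exact hp ⟨δ, β, I, a, hδ, h.transfer (fun s hs => (hr s hs).symm) hδ⟩
  obtain ⟨T, hT, P, hP, hN⟩ := exists_periodic_negligible hA
  obtain ⟨δ, hδ, hcov⟩ := exists_covered hd (hA.symmDiff (hP.commuting hT)) hN
    (hF.symmDiff (hP.finiteKernel hT))
  have key : ∀ p : Ultrafilter ℤ, (¬ ∃ δ β I a, 1 ≤ δ ∧ MinPattern d p δ β I a) →
      (A ∈ p ↔ P ∈ p) := by
    intro p hp
    have hnot : symmDiff A P ∉ p := fun h => by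
      obtain ⟨β, I, a, h⟩ := hcov.exists_pattern_mem h
      obtain ⟨δ', β', I', a', h1, h2, -⟩ := exists_minPattern hδ h
      exact hp ⟨δ', β', I', a', h1, h2⟩
    refine eventually_congr (p := (· ∈ A)) (q := (· ∈ P))
      ((Ultrafilter.eventually_not (p := (· ∈ symmDiff A P)).2 hnot).mono fun x hx => ?_)
    rw [Set.mem_symmDiff] at hx
    tauto
  rw [key p hp, key q hq, hP.mem_iff_mem hT hc]

/-! ### Boolean algebras and ultrafilters -/

theorem inBoolAlg_inter {X : Type*} {𝒮 : Set (Set X)} {s t : Set X} (hs : InBoolAlg 𝒮 s)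
    (ht : InBoolAlg 𝒮 t) : InBoolAlg 𝒮 (s ∩ t) := by
  have := ((hs.compl).union _ _ ht.compl).compl
  rwa [Set.compl_union, compl_compl, compl_compl] at this

theorem inBoolAlg_univ {X : Type*} (𝒮 : Set (Set X)) : InBoolAlg 𝒮 Set.univ := by
  simpa using InBoolAlg.empty (S := 𝒮).compl

/-- A family of sets closed under intersection, none of which is contained in `A`, extends
to an ultrafilter not containing `A`. -/
theorem exists_ultrafilter_of_not_subset {X : Type*} {ℬ : Set (Set X)} {A : Set X}
    (hne : ℬ.Nonempty) (hinter : ∀ s ∈ ℬ, ∀ t ∈ ℬ, s ∩ t ∈ ℬ) (hA : ∀ s ∈ ℬ, ¬ s ⊆ A) :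
    ∃ q : Ultrafilter X, A ∉ q ∧ ∀ s ∈ ℬ, s ∈ q := by
  let F : Filter X :=
    { sets := {t | ∃ s ∈ ℬ, s \ A ⊆ t}
      univ_sets := by
        obtain ⟨s, hs⟩ := hne
        exact ⟨s, hs, Set.subset_univ _⟩
      sets_of_superset := by
        rintro x y ⟨s, hs, h⟩ hxy
        exact ⟨s, hs, h.trans hxy⟩
      inter_sets := by
        rintro x y ⟨s, hs, h⟩ ⟨t, ht, h'⟩
        exact ⟨s ∩ t, hinter s hs t ht, fun z hz => ⟨h ⟨hz.1.1, hz.2⟩, h' ⟨hz.1.2, hz.2⟩⟩⟩ }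
  have hF : F.NeBot := by
    refine ⟨fun hbot => ?_⟩
    obtain ⟨s, hs, h⟩ := Filter.empty_mem_iff_bot.2 hbot
    exact hA s hs fun z hz => by_contra fun hzA => h ⟨hz, hzA⟩
  refine ⟨Ultrafilter.of F, ?_, fun s hs => Ultrafilter.of_le F ⟨s, hs, Set.sdiff_subset⟩⟩
  obtain ⟨s, hs⟩ := hne
  rw [← Ultrafilter.compl_mem_iff_notMem]
  exact Ultrafilter.of_le F ⟨s, hs, fun z hz => hz.2⟩

theorem inBoolAlg_of_ultrafilters {X : Type*} {𝒮 : Set (Set X)} {A : Set X}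
    (h : ∀ p q : Ultrafilter X, (∀ s ∈ 𝒮, s ∈ p ↔ s ∈ q) → (A ∈ p ↔ A ∈ q)) :
    InBoolAlg 𝒮 A := by
  have hloc : ∀ p : Ultrafilter X, A ∈ p → ∃ B, InBoolAlg 𝒮 B ∧ B ∈ p ∧ B ⊆ A := by
    intro p hp
    by_contra! hcon
    obtain ⟨q, hq, hqs⟩ := exists_ultrafilter_of_not_subset (A := A)
      (ℬ := {B | InBoolAlg 𝒮 B ∧ B ∈ p}) ⟨Set.univ, inBoolAlg_univ 𝒮, univ_mem⟩
      (fun s hs t ht => ⟨inBoolAlg_inter hs.1 ht.1, inter_mem hs.2 ht.2⟩) fun s hs => hcon s hs.1 hs.2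
    refine hq ((h p q fun s hs => ⟨fun hsp => hqs s ⟨.base s hs, hsp⟩, fun hsq => ?_⟩).1 hp)
    by_contra hsp
    exact Ultrafilter.compl_notMem_iff.2 hsq
      (hqs sᶜ ⟨(InBoolAlg.base s hs).compl, Ultrafilter.compl_mem_iff_notMem.2 hsp⟩)
  by_contra hA
  obtain ⟨q, hq, hqs⟩ := exists_ultrafilter_of_not_subset (A := Aᶜ)
    (ℬ := {E | ∃ B, InBoolAlg 𝒮 B ∧ B ⊆ A ∧ E = Bᶜ}) ⟨_, ∅, .empty, Set.empty_subset _, rfl⟩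
    (by
      rintro _ ⟨B, hB, hBA, rfl⟩ _ ⟨B', hB', hBA', rfl⟩
      exact ⟨B ∪ B', hB.union _ _ hB', Set.union_subset hBA hBA', (Set.compl_union _ _).symm⟩)
    (by
      rintro _ ⟨B, hB, hBA, rfl⟩ hsub
      rw [Set.compl_subset_compl] at hsub
      exact hA (hBA.antisymm hsub ▸ hB))
  obtain ⟨B, hB, hBq, hBA⟩ := hloc q (Ultrafilter.compl_notMem_iff.1 hq)
  exact Ultrafilter.compl_notMem_iff.2 hBq (hqs _ ⟨B, hB, hBA, rfl⟩)

theorem inBoolAlg_of_stable {d : ℕ} (hd : 2 ≤ d) {A : Set ℤ} (hauto : AutomaticZ d A)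
    (hst : StableIn A) : InBoolAlg (cosets ∪ repunitSums d) A :=
  inBoolAlg_of_ultrafilters fun _ _ hpq => mem_iff_mem_of_agree (by exact_mod_cast hd)
    (Commuting.of_stableIn hst) (FiniteKernel.of_automatic hd hauto)
    (fun s hs => hpq s (Or.inl hs)) fun s hs => hpq s (Or.inr hs)

end StableAutomatic

theorem stmt8 (d : ℕ) (hd : 2 ≤ d) (A : Set ℤ)
    (hauto : AutomaticZ d A) (hst : StableIn A) :
    InBoolAlg
      ({S : Set ℤ | ∃ (H : AddSubgroup ℤ) (c : ℤ), S = {x | ∃ h ∈ H, x = c + h}} ∪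
        {S : Set ℤ | ∃ (k : ℕ) (β : ℤ) (a : Fin k → ℤ) (δ : Fin k → ℕ),
          (∀ i, 1 ≤ δ i) ∧
          S = {x | ∃ c : Fin k → ℤ,
            (∀ i, c i ∈ Cset d (a i) (δ i)) ∧ x = β + ∑ i : Fin k, c i}})
      A := by
  exact StableAutomatic.inBoolAlg_of_stable hd hauto hst
end

section
/- Fix an integer d ≥ 2. Suppose A ⊆ ℕ is d-automatic and not d-sparse. If A is stable in ℕ, then A is generic in ℕ, i.e., finitely many (possibly negative) translates of A cover ℕ. -/
/-- A language is sparse if it is regular and the number of its words of length at most `k`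
is bounded by `C·(k^p + 1)`. -/
def SparseLang {α : Type} (L : Set (List α)) : Prop :=
  RegularLang L ∧ ∃ C p : ℕ, ∀ k : ℕ,
    {σ ∈ L | σ.length ≤ k}.Finite ∧ {σ ∈ L | σ.length ≤ k}.ncard ≤ C * (k ^ p + 1)

/-- Evaluation of a word over `Σ = {0,…,d−1}` base `d`, least significant digit first. -/
def evalNat {d : ℕ} : List (Fin d) → ℕ
  | [] => 0
  | k :: σ => (k : ℕ) + d * evalNat σ

/-- `A ⊆ ℕ` is `d`-automatic: `{σ ∈ Σ* : [σ] ∈ A}` is regular. -/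
def AutomaticN (d : ℕ) (A : Set ℕ) : Prop :=
  RegularLang {σ : List (Fin d) | evalNat σ ∈ A}

/-- The word `σ` has no trailing zeroes. -/
def NoTrailingZeros {d : ℕ} (σ : List (Fin d)) : Prop :=
  ∀ h : σ ≠ [], ((σ.getLast h : Fin d) : ℕ) ≠ 0

/-- `A ⊆ ℕ` is `d`-sparse: its language of representations with no trailing zeroes is sparse. -/
def SparseN (d : ℕ) (A : Set ℕ) : Prop :=
  SparseLang {σ : List (Fin d) | evalNat σ ∈ A ∧ NoTrailingZeros σ}

/-- `A ⊆ ℕ` is stable in ℕ if `x + y ∈ A` is a stable relation on ℕ. -/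
def StableInN (A : Set ℕ) : Prop := StableRel fun x y : ℕ => x + y ∈ A

/-- `A ⊆ ℕ` is generic in ℕ if finitely many (possibly negative) integer translates
of `A` cover ℕ. -/
def GenericN (A : Set ℕ) : Prop :=
  ∃ T : Finset ℤ, ∀ x : ℕ, ∃ t ∈ T, ∃ a ∈ A, (x : ℤ) = t + (a : ℤ)

/-! ### Finite relations -/

/-- A reflexive transitive relation on a finite type has, above every point, a point all of whose
successors lead back to it. -/
theorem exists_terminal {α : Type*} [Finite α] (R : α → α → Prop) (hrefl : ∀ x, R x x)
    (htrans : ∀ x y z, R x y → R y z → R x z) (x : α) :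
    ∃ y, R x y ∧ ∀ z, R y z → R z y := by
  by_contra! hcon
  have key : ∀ n : ℕ, ∀ y, R x y → {z | R y z}.ncard = n → False := by
    intro n
    induction n using Nat.strong_induction_on with
    | _ n ih =>
      intro y hxy hn
      obtain ⟨z, hyz, hzy⟩ := hcon y hxy
      refine ih _ ?_ z (htrans _ _ _ hxy hyz) rfl
      rw [← hn]
      refine Set.ncard_lt_ncard ⟨fun w hw => htrans _ _ _ hyz hw, fun h => hzy (h (hrefl y))⟩
        (Set.toFinite _)
  exact key _ x (hrefl x) rfl

/-! ### Branching states of an automaton -/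

namespace DFA

variable {α Q : Type}

/-- Some word leads from `p` to `p'`. -/
def Reach (M : DFA α Q) (p p' : Q) : Prop := ∃ w, M.evalFrom p w = p'

/-- Some word is accepted from `p`. -/
def Live (M : DFA α Q) (p : Q) : Prop := ∃ w, M.evalFrom p w ∈ M.accept

/-- The state `p` is live and carries two distinct loops of equal length. -/
def Branching (M : DFA α Q) (p : Q) : Prop :=
  M.Live p ∧ ∃ u v, u.length = v.length ∧ u ≠ v ∧ M.evalFrom p u = p ∧ M.evalFrom p v = p

theorem Reach.refl (M : DFA α Q) (p : Q) : M.Reach p p := ⟨[], rfl⟩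

theorem Reach.trans {M : DFA α Q} {p q r : Q} : M.Reach p q → M.Reach q r → M.Reach p r := by
  rintro ⟨w, rfl⟩ ⟨w', rfl⟩
  exact ⟨w ++ w', M.evalFrom_of_append _ _ _⟩

theorem Live.of_reach {M : DFA α Q} {p q : Q} (h : M.Reach p q) (hq : M.Live q) : M.Live p := by
  obtain ⟨w, rfl⟩ := h
  obtain ⟨w', hw'⟩ := hq
  exact ⟨w ++ w', by rwa [M.evalFrom_of_append]⟩

/-- If every product of two distinct words of equal length leads from `q` to a live state,
then `q` reaches a branching state. -/
theorem exists_branching_of_live [Finite Q] (M : DFA α Q) (q : Q) (u v : List α)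
    (hlen : u.length = v.length) (huv : u ≠ v)
    (hlive : ∀ L : List (List α), (∀ x ∈ L, x = u ∨ x = v) → M.Live (M.evalFrom q L.flatten)) :
    ∃ p, M.Reach q p ∧ M.Branching p := by
  let R : Q → Q → Prop := fun p p' =>
    ∃ L : List (List α), (∀ x ∈ L, x = u ∨ x = v) ∧ M.evalFrom p L.flatten = p'
  have hR : ∀ x y z, R x y → R y z → R x z := by
    rintro x _ _ ⟨L, hL, rfl⟩ ⟨L', hL', rfl⟩
    refine ⟨L ++ L', ?_, by rw [List.flatten_append, M.evalFrom_of_append]⟩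
    intro y hy
    rcases List.mem_append.1 hy with h | h
    exacts [hL y h, hL' y h]
  obtain ⟨p, ⟨L, hL, hp⟩, hterm⟩ := exists_terminal R (fun x => ⟨[], by simp, rfl⟩) hR q
  obtain ⟨Y, -, hY⟩ := hterm (M.evalFrom p u) ⟨[u], by simp, by simp⟩
  obtain ⟨Z, -, hZ⟩ := hterm (M.evalFrom p v) ⟨[v], by simp, by simp⟩
  refine ⟨p, ⟨_, hp⟩, hp ▸ hlive L hL, u ++ Y.flatten ++ (v ++ Z.flatten),
    v ++ Z.flatten ++ (u ++ Y.flatten), ?_, ?_, ?_, ?_⟩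
  · simp only [List.length_append]; omega
  · intro h
    rw [List.append_assoc, List.append_assoc] at h
    exact huv (List.append_inj_left h hlen)
  · simp only [M.evalFrom_of_append, hY, hZ]
  · simp only [M.evalFrom_of_append, hY, hZ]

open Classical in
/-- The last time at which the run of `w` from `p` visits `s`, and the letter read then. -/
noncomputable def lastVisit (M : DFA α Q) (p : Q) (w : List α) (s : Q) : ℕ × Option α :=
  (Nat.findGreatest (fun k => M.evalFrom p (w.take k) = s) w.length,
    w[Nat.findGreatest (fun k => M.evalFrom p (w.take k) = s) w.length]?)

theorem eq_of_lastVisit_eq (M : DFA α Q) (p : Q) (hp : ∀ q, M.Reach p q → ¬ M.Branching q)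
    {w w' : List α} (hlen : w.length = w'.length) (hw : M.Live (M.evalFrom p w))
    (h : M.lastVisit p w = M.lastVisit p w') : w = w' := by
  classical
  by_contra hne
  have hex : ∃ t : ℕ, w[t]? ≠ w'[t]? := by
    by_contra! hall
    exact hne (List.ext_getElem? hall)
  obtain ⟨t, ht, hmin⟩ : ∃ t : ℕ, w[t]? ≠ w'[t]? ∧ ∀ i < t, w[i]? = w'[i]? :=
    ⟨Nat.find hex, Nat.find_spec hex, fun i hi => not_not.1 (Nat.find_min hex hi)⟩
  have htl : t < w.length := by
    by_contra hge
    exact ht (by rw [List.getElem?_eq_none (by omega), List.getElem?_eq_none (by omega)])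
  have htake : w.take t = w'.take t := by
    refine List.ext_getElem? fun i => ?_
    simp only [List.getElem?_take]
    split_ifs with hi
    exacts [hmin i hi, rfl]
  set s := M.evalFrom p (w.take t) with hs
  have hs' : M.evalFrom p (w'.take t) = s := by rw [← htake]
  have hh := congrFun h s
  simp only [lastVisit, Prod.mk.injEq] at hh
  obtain ⟨h1, h2⟩ := hh
  set k := Nat.findGreatest (fun k => M.evalFrom p (w.take k) = s) w.length with hk
  rw [← h1] at h2
  have hle : t ≤ k := Nat.le_findGreatest htl.le hs.symm
  have hPk : M.evalFrom p (w.take k) = s :=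
    Nat.findGreatest_spec (P := fun k => M.evalFrom p (w.take k) = s) htl.le hs.symm
  have hPk' : M.evalFrom p (w'.take k) = s := by
    rw [h1]
    exact Nat.findGreatest_spec (P := fun k => M.evalFrom p (w'.take k) = s) (hlen ▸ htl.le) hs'
  have htk : t < k := lt_of_le_of_ne hle fun he => ht (he ▸ h2)
  have hsplit : ∀ x : List α, x.take k = x.take t ++ (x.take k).drop t := by
    intro x
    conv_lhs => rw [← List.take_append_drop t (x.take k)]
    rw [List.take_take, min_eq_left hle]
  refine hp s ⟨_, hs.symm⟩ ⟨Live.of_reach ⟨w.drop t, ?_⟩ hw,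
    (w.take k).drop t, (w'.take k).drop t, ?_, ?_, ?_, ?_⟩
  · rw [hs, ← M.evalFrom_of_append, List.take_append_drop]
  · simp [hlen]
  · intro he
    have : w.take k = w'.take k := by rw [hsplit w, hsplit w', he, htake]
    have h3 := congrArg (fun x : List α => x[t]?) this
    simp only [List.getElem?_take, if_pos htk] at h3
    exact ht h3
  · conv_lhs => rw [hs]
    rw [← M.evalFrom_of_append, ← hsplit, hPk]
  · conv_lhs => rw [← hs']
    rw [← M.evalFrom_of_append, ← hsplit, hPk']

/-- Without reachable branching states there are only polynomially many live words. -/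
theorem card_live_le [Fintype α] [Fintype Q] (M : DFA α Q) (p : Q)
    (hp : ∀ q, M.Reach p q → ¬ M.Branching q) (k : ℕ) :
    {w : List α | M.Live (M.evalFrom p w) ∧ w.length ≤ k}.Finite ∧
    {w : List α | M.Live (M.evalFrom p w) ∧ w.length ≤ k}.ncard ≤
      (k + 1) * ((k + 1) * (Fintype.card α + 1)) ^ Fintype.card Q := by
  classical
  let f : List α → Fin (k + 1) × (Q → Fin (k + 1) × Option α) := fun w =>
    (Fin.ofNat _ w.length, fun s => (Fin.ofNat _ (M.lastVisit p w s).1, (M.lastVisit p w s).2))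
  have hinj : Set.InjOn f {w : List α | M.Live (M.evalFrom p w) ∧ w.length ≤ k} := by
    rintro w ⟨hw, hwk⟩ w' ⟨-, hwk'⟩ h
    simp only [f, Prod.mk.injEq] at h
    obtain ⟨h1, h2⟩ := h
    have hmod : ∀ a b : ℕ, a ≤ k → b ≤ k → Fin.ofNat (k + 1) a = Fin.ofNat (k + 1) b → a = b := by
      intro a b ha hb hab
      have := congrArg Fin.val hab
      simpa [Fin.ofNat, Nat.mod_eq_of_lt (Nat.lt_succ_of_le ha),
        Nat.mod_eq_of_lt (Nat.lt_succ_of_le hb)] using this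
    refine M.eq_of_lastVisit_eq p hp (hmod _ _ hwk hwk' h1) hw (funext fun s => ?_)
    have h3 := congrFun h2 s
    simp only [Prod.mk.injEq] at h3
    exact Prod.ext (hmod _ _ ((Nat.findGreatest_le _).trans hwk)
      ((Nat.findGreatest_le _).trans hwk') h3.1) h3.2
  refine ⟨Set.Finite.of_injOn (Set.mapsTo_univ _ _) hinj Set.finite_univ, ?_⟩
  calc _ ≤ (Set.univ : Set (Fin (k + 1) × (Q → Fin (k + 1) × Option α))).ncard :=
        Set.ncard_le_ncard_of_injOn f (fun _ _ => Set.mem_univ _) hinj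
    _ = _ := by simp [Set.ncard_univ]

end DFA

theorem noTrailingZeros_regular (d : ℕ) :
    Language.IsRegular ({σ : List (Fin d) | NoTrailingZeros σ} : Language (Fin d)) := by
  refine ⟨Bool, inferInstance, ⟨fun _ k => decide ((k : ℕ) ≠ 0), true, {true}⟩, ?_⟩
  ext σ
  rw [DFA.mem_accepts]
  induction σ using List.reverseRecOn with
  | nil => exact iff_of_true rfl fun h => (h rfl).elim
  | append_singleton τ k _ =>
    rw [DFA.eval_append_singleton]
    change decide ((k : ℕ) ≠ 0) = true ↔ NoTrailingZeros (τ ++ [k])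
    simp [NoTrailingZeros]

theorem exists_branching_of_not_sparse {d : ℕ} {A : Set ℕ} {Q : Type} [Fintype Q]
    (M : DFA (Fin d) Q) (hM : M.accepts = {σ : List (Fin d) | evalNat σ ∈ A})
    (hns : ¬ SparseN d A) : ∃ q, M.Reach M.start q ∧ M.Branching q := by
  by_contra! hp
  refine hns ⟨?_, (2 * (d + 1)) ^ (Fintype.card Q + 1), Fintype.card Q + 1, fun k => ?_⟩
  · have h1 : Language.IsRegular ({σ : List (Fin d) | evalNat σ ∈ A} : Language (Fin d)) :=
      ⟨Q, inferInstance, M, hM⟩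
    exact h1.inf (noTrailingZeros_regular d)
  · obtain ⟨hfin, hcard⟩ := M.card_live_le M.start hp k
    have hsub : {σ ∈ {σ : List (Fin d) | evalNat σ ∈ A ∧ NoTrailingZeros σ} | σ.length ≤ k} ⊆
        {w | M.Live (M.evalFrom M.start w) ∧ w.length ≤ k} := by
      rintro σ ⟨⟨hσ, -⟩, hk⟩
      have : σ ∈ M.accepts := by rw [hM]; exact hσ
      exact ⟨⟨[], this⟩, hk⟩
    refine ⟨hfin.subset hsub, (Set.ncard_le_ncard hsub hfin).trans (hcard.trans ?_)⟩
    rw [Fintype.card_fin]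
    set m := Fintype.card Q
    have h1 : (k + 1) ^ (m + 1) ≤ 2 ^ (m + 1) * (k ^ (m + 1) + 1) := by
      rcases Nat.eq_zero_or_pos k with rfl | hk
      · simpa using Nat.one_le_two_pow
      · calc (k + 1) ^ (m + 1) ≤ (2 * k) ^ (m + 1) := Nat.pow_le_pow_left (by omega) _
          _ = 2 ^ (m + 1) * k ^ (m + 1) := mul_pow _ _ _
          _ ≤ _ := Nat.mul_le_mul_left _ (Nat.le_succ _)
    calc (k + 1) * ((k + 1) * (d + 1)) ^ m = (k + 1) ^ (m + 1) * (d + 1) ^ m := by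
          rw [mul_pow]; ring
      _ ≤ (2 ^ (m + 1) * (k ^ (m + 1) + 1)) * (d + 1) ^ (m + 1) :=
          Nat.mul_le_mul h1 (Nat.pow_le_pow_right (Nat.succ_pos d) (Nat.le_succ m))
      _ = _ := by rw [mul_pow]; ring

/-! ### Words and their values -/

theorem evalNat_append {d : ℕ} (σ τ : List (Fin d)) :
    evalNat (σ ++ τ) = evalNat σ + d ^ σ.length * evalNat τ := by
  induction σ with
  | nil => simp [evalNat]
  | cons k σ ih => simp only [List.cons_append, evalNat, ih, List.length_cons]; ring

theorem evalNat_lt {d : ℕ} (σ : List (Fin d)) : evalNat σ < d ^ σ.length := by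
  induction σ with
  | nil => simp [evalNat]
  | cons k σ ih =>
    have hk := k.2
    simp only [evalNat, List.length_cons, pow_succ]
    nlinarith

theorem eq_of_evalNat_eq {d : ℕ} {σ τ : List (Fin d)} (hlen : σ.length = τ.length)
    (h : evalNat σ = evalNat τ) : σ = τ := by
  induction σ generalizing τ with
  | nil => exact (List.length_eq_zero_iff.1 hlen.symm).symm
  | cons k σ ih =>
    cases τ with
    | nil => simp at hlen
    | cons l τ =>
      simp only [evalNat] at h
      have hkl : (k : ℕ) = l := by
        have := congrArg (· % d) h
        simpa [Nat.add_mul_mod_self_left, Nat.mod_eq_of_lt k.2, Nat.mod_eq_of_lt l.2] using this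
      have hd : 0 < d := k.pos
      rw [hkl] at h
      rw [Fin.ext hkl, ih (by simpa using hlen)
        (Nat.eq_of_mul_eq_mul_left hd (Nat.add_left_cancel h))]

theorem exists_word {d : ℕ} (hd : 0 < d) (L n : ℕ) (hn : n < d ^ L) :
    ∃ z : List (Fin d), z.length = L ∧ evalNat z = n := by
  induction L generalizing n with
  | zero => exact ⟨[], rfl, by simp at hn; simp [evalNat, hn]⟩
  | succ L ih =>
    obtain ⟨z, hz, hv⟩ := ih (n / d) (Nat.div_lt_of_lt_mul (by rwa [mul_comm, ← pow_succ]))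
    exact ⟨⟨n % d, Nat.mod_lt _ hd⟩ :: z, by simp [hz], by simp [evalNat, hv, Nat.mod_add_div]⟩

/-- The `n`-fold repetition of a word. -/
def wordPow {α : Type} (w : List α) (n : ℕ) : List α := (List.replicate n w).flatten

theorem wordPow_succ {α : Type} (w : List α) (n : ℕ) : wordPow w (n + 1) = w ++ wordPow w n := by
  simp [wordPow, List.replicate_succ]

theorem wordPow_add {α : Type} (w : List α) (m n : ℕ) :
    wordPow w (m + n) = wordPow w m ++ wordPow w n := by
  rw [wordPow, ← List.replicate_append_replicate, List.flatten_append]; rfl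

theorem length_wordPow {α : Type} (w : List α) (n : ℕ) :
    (wordPow w n).length = n * w.length := by
  simp [wordPow]

theorem DFA.evalFrom_wordPow {α Q : Type} (M : DFA α Q) {q : Q} {w : List α}
    (h : M.evalFrom q w = q) (n : ℕ) : M.evalFrom q (wordPow w n) = q := by
  induction n with
  | zero => rfl
  | succ n ih => rw [wordPow_succ, M.evalFrom_of_append, h, ih]

theorem evalNat_replace {d : ℕ} {s s' : List (Fin d)} {δ : ℕ} (p z : List (Fin d))
    (hlen : s.length = s'.length) (h : evalNat s' = evalNat s + δ) :
    d ^ p.length * δ + evalNat (p ++ s ++ z) = evalNat (p ++ s' ++ z) := by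
  simp only [evalNat_append, List.length_append, hlen, h]
  ring

/-- Repeating a word of non-maximal value leaves room for large numbers above it. -/
theorem evalNat_wordPow_add_lt {d : ℕ} {u : List (Fin d)} (hu : evalNat u + 1 < d ^ u.length)
    (k : ℕ) : evalNat (wordPow u k) + k < d ^ (k * u.length) := by
  induction k with
  | zero => simp [wordPow, evalNat]
  | succ k ih =>
    rw [wordPow_succ, evalNat_append, add_mul, one_mul, pow_add, mul_comm (d ^ (k * _))]
    set B := d ^ u.length
    have h1 : B * (evalNat (wordPow u k) + k + 1) ≤ B * d ^ (k * u.length) :=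
      Nat.mul_le_mul_left _ ih
    have h2 : k * 1 ≤ k * B := Nat.mul_le_mul_left _ (by omega)
    nlinarith

/-! ### Stability applied to loops of an automaton -/

section Loops

variable {d : ℕ} {A : Set ℕ} {Q : Type} {M : DFA (Fin d) Q}

theorem mem_iff_evalFrom (hM : M.accepts = {σ : List (Fin d) | evalNat σ ∈ A})
    (σ : List (Fin d)) : evalNat σ ∈ A ↔ M.evalFrom M.start σ ∈ M.accept :=
  (iff_of_eq (congrArg (σ ∈ ·) hM)).symm

theorem live_of_loops (hM : M.accepts = {σ : List (Fin d) | evalNat σ ∈ A}) (hst : StableInN A)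
    {q : Q} (hq : M.Reach M.start q) (hlive : M.Live q) {r s s' x t : List (Fin d)} {δ : ℕ}
    (hr : M.evalFrom q r = q) (hs : M.evalFrom q s = q) (hs' : M.evalFrom q s' = q)
    (ht : M.evalFrom q t = q) (hrs : r.length = s.length) (hss' : s.length = s'.length)
    (hrx : r.length = x.length) (hδs : evalNat s' = evalNat s + δ)
    (hδx : evalNat x = evalNat r + δ) : M.Live (M.evalFrom (M.evalFrom q x) t) := by
  by_contra hx
  obtain ⟨a, rfl⟩ := hq
  obtain ⟨b, hb⟩ := hlive
  obtain ⟨N, hN⟩ := hst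
  have hrt : M.evalFrom (M.evalFrom M.start a) (r ++ t) = M.evalFrom M.start a := by
    rw [M.evalFrom_of_append, hr, ht]
  have hst : M.evalFrom (M.evalFrom M.start a) (s ++ t) = M.evalFrom M.start a := by
    rw [M.evalFrom_of_append, hs, ht]
  refine hN ⟨fun i => d ^ (a.length + i * (s.length + t.length)) * δ,
    fun j => evalNat (a ++ wordPow (s ++ t) (j + 1) ++ wordPow (r ++ t) (N - j) ++ b), ?_⟩
  intro i j
  have hi := i.2
  have hj := j.2
  rw [← Fin.val_fin_le]
  beta_reduce
  generalize (i : ℕ) = i at *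
  generalize (j : ℕ) = j at *
  constructor
  · intro hmem
    by_contra! hlt
    obtain ⟨e, rfl⟩ : ∃ e, i = j + 1 + e := ⟨i - (j + 1), by omega⟩
    obtain ⟨f, hf⟩ : ∃ f, N - j = e + (f + 1) := ⟨N - j - e - 1, by omega⟩
    rw [hf, wordPow_add (r ++ t), wordPow_succ (r ++ t)] at hmem
    have key := evalNat_replace (a ++ wordPow (s ++ t) (j + 1) ++ wordPow (r ++ t) e)
      (t ++ wordPow (r ++ t) f ++ b) hrx hδx
    have hl : (a ++ wordPow (s ++ t) (j + 1) ++ wordPow (r ++ t) e).length =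
        a.length + (j + 1 + e) * (s.length + t.length) := by
      simp only [List.length_append, length_wordPow, hrs]; ring
    rw [hl] at key
    simp only [List.append_assoc] at key hmem
    rw [key, mem_iff_evalFrom hM] at hmem
    simp only [M.evalFrom_of_append _ a, M.evalFrom_of_append _ (wordPow _ _),
      M.evalFrom_wordPow hrt, M.evalFrom_wordPow hst, M.evalFrom_of_append _ x,
      M.evalFrom_of_append _ t] at hmem
    rw [← M.evalFrom_of_append _ (wordPow _ _)] at hmem
    exact hx ⟨_, hmem⟩
  · intro hle
    obtain ⟨e, rfl⟩ : ∃ e, j = i + e := ⟨j - i, by omega⟩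
    rw [show i + e + 1 = i + (e + 1) by ring, wordPow_add, wordPow_succ]
    have key := evalNat_replace (a ++ wordPow (s ++ t) i)
      (t ++ wordPow (s ++ t) e ++ wordPow (r ++ t) (N - (i + e)) ++ b) hss' hδs
    have hl : (a ++ wordPow (s ++ t) i).length = a.length + i * (s.length + t.length) := by
      simp only [List.length_append, length_wordPow]
    rw [hl] at key
    simp only [List.append_assoc] at key ⊢
    rw [key, mem_iff_evalFrom hM]
    simpa only [M.evalFrom_of_append _ a, M.evalFrom_of_append _ (wordPow _ _),
      M.evalFrom_wordPow hrt, M.evalFrom_wordPow hst, M.evalFrom_of_append _ s',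
      M.evalFrom_of_append _ t, hs', ht] using hb

theorem reach_of_loops [Finite Q] (hM : M.accepts = {σ : List (Fin d) | evalNat σ ∈ A})
    (hst : StableInN A) {q : Q} (hq : M.Reach M.start q) (hlive : M.Live q)
    (hmin : ∀ p, M.Branching p → M.Reach q p → M.Reach p q) {u v : List (Fin d)}
    (huv : u.length = v.length) (hne : u ≠ v) (hu : M.evalFrom q u = q) (hv : M.evalFrom q v = q)
    {r s s' x : List (Fin d)} {δ : ℕ}
    (hr : M.evalFrom q r = q) (hs : M.evalFrom q s = q) (hs' : M.evalFrom q s' = q)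
    (hrs : r.length = s.length) (hss' : s.length = s'.length)
    (hrx : r.length = x.length) (hδs : evalNat s' = evalNat s + δ)
    (hδx : evalNat x = evalNat r + δ) : M.Reach (M.evalFrom q x) q := by
  obtain ⟨p, hxp, hp⟩ := M.exists_branching_of_live (M.evalFrom q x) u v huv hne fun L hL => by
    have ht : M.evalFrom q L.flatten = q := by
      clear hne
      induction L with
      | nil => rfl
      | cons w L ih =>
        rw [List.flatten_cons, M.evalFrom_of_append]
        have hw : M.evalFrom q w = q := by
          rcases hL w (by simp) with rfl | rfl <;> assumption
        rw [hw]
        exact ih fun y hy => hL y (by simp [hy])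
    exact live_of_loops hM hst hq hlive hr hs hs' ht hrs hss' hrx hδs hδx
  exact hxp.trans (hmin p hp (DFA.Reach.trans ⟨x, rfl⟩ hxp))

/-- The words whose value exceeds that of a power of the loop `u` by a multiple of
`evalNat v - evalNat u` lead from `q` to states reaching `q`. -/
theorem reach_of_value_eq [Finite Q] (hd : 0 < d)
    (hM : M.accepts = {σ : List (Fin d) | evalNat σ ∈ A})
    (hst : StableInN A) {q : Q} (hq : M.Reach M.start q) (hlive : M.Live q)
    (hmin : ∀ p, M.Branching p → M.Reach q p → M.Reach p q) {u v : List (Fin d)} {δ : ℕ}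
    (huv : u.length = v.length) (hu : M.evalFrom q u = q) (hv : M.evalFrom q v = q)
    (hδ : evalNat v = evalNat u + δ) (hδ0 : 0 < δ) (k j : ℕ) (z : List (Fin d))
    (hz : z.length = k * u.length) (hval : evalNat z = evalNat (wordPow u k) + j * δ) :
    M.Reach (M.evalFrom q z) q := by
  have hne : u ≠ v := by rintro rfl; omega
  induction j generalizing z with
  | zero =>
    have : z = wordPow u k :=
      eq_of_evalNat_eq (by rw [hz, length_wordPow]) (by rw [hval]; ring)
    rw [this, M.evalFrom_wordPow hu]
    exact DFA.Reach.refl M q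
  | succ j ih =>
    have hlt : evalNat (wordPow u k) + j * δ < evalNat z := by rw [hval]; nlinarith
    obtain ⟨z', hz', hval'⟩ := exists_word hd (k * u.length) (evalNat (wordPow u k) + j * δ)
      (hlt.trans (hz ▸ evalNat_lt z))
    obtain ⟨y, hy⟩ := ih z' hz' hval'
    have hlen0 : 0 < u.length := by
      rcases Nat.eq_zero_or_pos u.length with h | h
      · exact (hne (by
          rw [List.length_eq_zero_iff.1 h, List.length_eq_zero_iff.1 (huv.symm.trans h)])).elim
      · exact h
    have hz0 : 0 < z'.length := by
      have h1 := evalNat_lt z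
      rcases Nat.eq_zero_or_pos z'.length with h | h
      · rw [hz, ← hz', h, pow_zero] at h1; omega
      · exact h
    obtain ⟨m, hm⟩ : ∃ m, u.length = m + 1 := ⟨u.length - 1, by omega⟩
    obtain ⟨n, hn⟩ : ∃ n, (z' ++ y).length = n + 1 :=
      ⟨(z' ++ y).length - 1, by rw [List.length_append]; omega⟩
    have hloop : M.evalFrom q (z' ++ y) = q := by rw [M.evalFrom_of_append, hy]
    have hx := reach_of_loops hM hst hq hlive hmin huv hne hu hv
      (r := wordPow (z' ++ y) (m + 1)) (s := wordPow u (n + 1)) (s' := v ++ wordPow u n)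
      (x := z ++ (y ++ wordPow (z' ++ y) m)) (δ := δ)
      (M.evalFrom_wordPow hloop _) (M.evalFrom_wordPow hu _)
      (by rw [M.evalFrom_of_append, hv, M.evalFrom_wordPow hu])
      (by rw [length_wordPow, length_wordPow, hn, hm, mul_comm])
      (by rw [wordPow_succ]; simp [huv])
      (by rw [wordPow_succ]; simp only [List.length_append, hz, hz']; ring)
      (by rw [wordPow_succ, evalNat_append, evalNat_append, hδ, huv]; ring)
      (by
        rw [wordPow_succ, List.append_assoc, evalNat_append, evalNat_append z', hz, hz', hval,
          hval']
        ring)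
    rw [M.evalFrom_of_append] at hx
    exact DFA.Reach.trans ⟨_, rfl⟩ hx

end Loops

/-! ### Ladders and genericity -/

/-- If finite sets of multiples of `D` are covered by a bounded number of translates of a
stable set `A`, then `A` is generic. -/
theorem genericN_of_cover {A : Set ℕ} (hst : StableInN A) {κ : Type} [Finite κ] {D : ℕ}
    (hD : 0 < D) (hcov : ∀ n : ℕ, ∃ Y : κ → ℕ, ∀ i ≤ n, ∃ c, i * D + Y c ∈ A) : GenericN A := by
  classical
  have := Fintype.ofFinite κ
  by_contra hgen
  have havoid : ∀ G : Finset ℕ, ∃ a : ℕ, ∀ y ∈ G, a * D + y ∉ A := by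
    intro G
    by_contra! hG
    refine hgen ⟨(G ×ˢ Finset.range D).image fun p => -((p.1 : ℤ) + p.2), fun x => ?_⟩
    obtain ⟨y, hy, hyA⟩ := hG ((x + D - 1) / D)
    have h1 : D * ((x + D - 1) / D) + (x + D - 1) % D = x + D - 1 := Nat.div_add_mod _ _
    have h2 := Nat.mod_lt (x + D - 1) hD
    rw [mul_comm] at h1
    set b := (x + D - 1) / D * D
    refine ⟨_, Finset.mem_image.2 ⟨(y, b - x), Finset.mem_product.2 ⟨hy, Finset.mem_range.2 ?_⟩,
      rfl⟩, _, hyA, ?_⟩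
    · simp only; omega
    · simp only; omega
  obtain ⟨f, -, hf⟩ := exists_seq_of_forall_finset_exists (α := ℕ × (κ → ℕ)) (fun _ => True)
    (fun p p' => (∃ c, p.1 * D + p'.2 c ∈ A) ∧ ∀ c, p'.1 * D + p.2 c ∉ A) fun F _ => by
      obtain ⟨a, ha⟩ := havoid (F.biUnion fun p => Finset.univ.image p.2)
      obtain ⟨Y, hY⟩ := hcov (F.sup Prod.fst)
      refine ⟨(a, Y), trivial, fun p hp => ⟨hY _ (Finset.le_sup (f := Prod.fst) hp), fun c => ?_⟩⟩
      exact ha _ (Finset.mem_biUnion.2 ⟨p, hp, Finset.mem_image_of_mem _ (Finset.mem_univ c)⟩)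
  have hne : Nonempty κ := ⟨(hf 0 1 one_pos).1.choose⟩
  have hcol : ∀ m n, ∃ c, m < n → (f m).1 * D + (f n).2 c ∈ A := by
    intro m n
    by_cases h : m < n
    · exact (hf m n h).1.imp fun c hc _ => hc
    · exact ⟨Classical.arbitrary κ, fun h' => (h h').elim⟩
  choose col hcol using hcol
  have hlim : ∀ m, ∃ c, ∀ᶠ n in (Filter.hyperfilter ℕ : Filter ℕ), col m n = c := by
    intro m
    obtain ⟨c, hc⟩ := Ultrafilter.eq_pure_of_finite ((Filter.hyperfilter ℕ).map (col m))
    refine ⟨c, ?_⟩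
    have : {c} ∈ (Filter.hyperfilter ℕ).map (col m) := by rw [hc]; exact rfl
    exact Ultrafilter.mem_map.1 this
  choose lim hlim using hlim
  obtain ⟨c, hc⟩ : ∃ c, ∀ᶠ n in (Filter.hyperfilter ℕ : Filter ℕ), lim n = c := by
    obtain ⟨c, hc⟩ := Ultrafilter.eq_pure_of_finite ((Filter.hyperfilter ℕ).map lim)
    refine ⟨c, ?_⟩
    have : {c} ∈ (Filter.hyperfilter ℕ).map lim := by rw [hc]; exact rfl
    exact Ultrafilter.mem_map.1 this
  obtain ⟨h, -, hh⟩ := exists_seq_of_forall_finset_exists (fun n => lim n = c)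
    (fun m n => m < n ∧ col m n = c) fun F hF => by
      have h1 : ∀ m ∈ F, ∀ᶠ n in (Filter.hyperfilter ℕ : Filter ℕ), m < n ∧ col m n = c := by
        intro m hm
        have h2 : ∀ᶠ n in (Filter.hyperfilter ℕ : Filter ℕ), m < n :=
          Nat.hyperfilter_le_atTop (Filter.eventually_gt_atTop m)
        filter_upwards [h2, hlim m] with n hn hn'
        exact ⟨hn, hn'.trans (hF m hm)⟩
      exact (hc.and ((Filter.eventually_all_finset F).2 h1)).exists
  have hmono : StrictMono h := fun m n hmn => (hh m n hmn).1
  obtain ⟨N, hN⟩ := hst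
  refine hN ⟨fun i => (f (h (2 * i))).1 * D, fun j => (f (h (2 * j + 1))).2 c, fun i j => ?_⟩
  constructor
  · intro hmem
    by_contra! hlt
    have hlt' : (j : ℕ) < i := hlt
    exact (hf _ _ (hmono (show 2 * (j : ℕ) + 1 < 2 * i by omega))).2 c hmem
  · intro hle
    have hle' : (i : ℕ) ≤ j := hle
    obtain ⟨h1, h2⟩ := hh (2 * i) (2 * j + 1) (by omega)
    have h3 := hcol _ _ h1
    rwa [h2] at h3

theorem stmt9 (d : ℕ) (hd : 2 ≤ d) (A : Set ℕ)
    (hauto : AutomaticN d A) (hns : ¬ SparseN d A) (hst : StableInN A) :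
    GenericN A := by
  obtain ⟨Q, _, M, hM⟩ := hauto
  obtain ⟨q₀, hq₀, hbr₀⟩ := exists_branching_of_not_sparse M hM hns
  obtain ⟨⟨q, hbr⟩, hq₀q, hterm⟩ := exists_terminal
    (fun p p' : {p // M.Branching p} => M.Reach p.1 p'.1) (fun p => DFA.Reach.refl M p.1)
    (fun _ _ _ => DFA.Reach.trans) ⟨q₀, hbr₀⟩
  have hq : M.Reach M.start q := hq₀.trans hq₀q
  have hmin : ∀ p, M.Branching p → M.Reach q p → M.Reach p q := fun p hp => hterm ⟨p, hp⟩
  obtain ⟨hlive, u, v, huv, hne, hu, hv⟩ := hbr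
  clear hterm hq₀q
  wlog hlt : evalNat u < evalNat v generalizing u v
  · refine this v u huv.symm hne.symm hv hu (lt_of_le_of_ne (not_lt.1 hlt) fun h => ?_)
    exact hne (eq_of_evalNat_eq huv h.symm)
  obtain ⟨δ, hδ⟩ := Nat.exists_eq_add_of_lt hlt
  rw [add_assoc] at hδ
  obtain ⟨a, ha⟩ := id hq
  have hroom : evalNat u + 1 < d ^ u.length := by
    have := evalNat_lt v
    rw [← huv] at this
    omega
  have hb : ∀ p, ∃ b, M.Live p → M.evalFrom p b ∈ M.accept := fun p => by
    by_cases h : M.Live p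
    · exact h.imp fun b hb _ => hb
    · exact ⟨[], fun h' => (h h').elim⟩
  choose b hb using hb
  refine genericN_of_cover hst (κ := Q) (D := d ^ a.length * (δ + 1)) (by positivity) fun n => ?_
  refine ⟨fun p => evalNat (a ++ wordPow u (n * (δ + 1)) ++ b p), fun i hi => ?_⟩
  set k := n * (δ + 1) with hk
  have hik : i * (δ + 1) ≤ k := Nat.mul_le_mul_right _ hi
  obtain ⟨z, hz, hval⟩ := exists_word (by omega : 0 < d) (k * u.length)
    (evalNat (wordPow u k) + i * (δ + 1))
    (lt_of_le_of_lt (Nat.add_le_add_left hik _) (evalNat_wordPow_add_lt hroom k))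
  have hreach := reach_of_value_eq (by omega) hM hst hq hlive hmin huv hu hv hδ
    (Nat.succ_pos δ) k i z hz hval
  refine ⟨M.evalFrom q z, ?_⟩
  have key := evalNat_replace a (b (M.evalFrom q z))
    (show (wordPow u k).length = z.length by rw [hz, length_wordPow]) hval
  rw [show i * (d ^ a.length * (δ + 1)) = d ^ a.length * (i * (δ + 1)) by ring, key,
    mem_iff_evalFrom hM, List.append_assoc, M.evalFrom_of_append, ha, M.evalFrom_of_append]
  exact hb _ (DFA.Live.of_reach hreach hlive)
end
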